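/- The following three problems are pairwise effectively interreducible (each many-one reduces to each other via total computable functions on codes): (1) HyperCTL* countable satisfiability, i.e. the set of codes of HyperCTL* sentences having a model with countably many vertices; (2) HyperCTL* finitely-branching satisfiability, i.e. the set of codes of HyperCTL* sentences having a model in which every vertex has only finitely many successors; (3) truth in second-order arithmetic, i.e. the set of codes of sentences of second-order arithmetic that hold in the standard model (ℕ, 0, 1, +, ·, <, ∈). -/

import Mathlib

/-! ### Transition systems and HyperCTL* -/

/-- A transition system over `AP`: every vertex has an outgoing edge. -/
structure TS (AP : Type) : Type 1 where
  V : Type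
  E : V → V → Prop
  vI : V
  lab : V → Set AP
  succ : ∀ v, ∃ w, E v w

/-- A path through a transition system. -/
def TS.IsPath {AP : Type} (S : TS AP) (ρ : ℕ → S.V) : Prop :=
  ∀ i, S.E (ρ i) (ρ (i + 1))

/-- HyperCTL* formulas; path variables are natural numbers. -/
inductive CTL (AP : Type) : Type where
  | atom : AP → ℕ → CTL AP
  | neg  : CTL AP → CTL AP
  | disj : CTL AP → CTL AP → CTL AP
  | next : CTL AP → CTL AP
  | untl : CTL AP → CTL AP → CTL AP
  | ex   : ℕ → CTL AP → CTL AP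
  | all  : ℕ → CTL AP → CTL AP

/-- Semantics of HyperCTL* w.r.t. a path assignment `As` and the variable `r`
most recently added to the assignment: quantified paths start at the first
vertex of the most recently assigned path. -/
def CTL.sat {AP : Type} (S : TS AP) : CTL AP → (ℕ → ℕ → S.V) → ℕ → Prop
  | .atom a x, As, _ => a ∈ S.lab (As x 0)
  | .neg φ, As, r => ¬ φ.sat S As r
  | .disj φ ψ, As, r => φ.sat S As r ∨ ψ.sat S As r
  | .next φ, As, r => φ.sat S (fun x i => As x (i + 1)) r
  | .untl φ ψ, As, r =>
      ∃ j, ψ.sat S (fun x i => As x (i + j)) r ∧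
        ∀ j' < j, φ.sat S (fun x i => As x (i + j')) r
  | .ex x φ, As, r => ∃ ρ : ℕ → S.V, S.IsPath ρ ∧ ρ 0 = As r 0 ∧
      φ.sat S (Function.update As x ρ) x
  | .all x φ, As, r => ∀ ρ : ℕ → S.V, S.IsPath ρ → ρ 0 = As r 0 →
      φ.sat S (Function.update As x ρ) x

def CTL.freeVars {AP : Type} : CTL AP → Set ℕ
  | .atom _ x => {x}
  | .neg φ => φ.freeVars
  | .disj φ ψ => φ.freeVars ∪ ψ.freeVars
  | .next φ => φ.freeVars
  | .untl φ ψ => φ.freeVars ∪ ψ.freeVars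
  | .ex x φ => φ.freeVars \ {x}
  | .all x φ => φ.freeVars \ {x}

/-- Every temporal operator occurs in the scope of a path quantifier. -/
def CTL.guarded {AP : Type} : CTL AP → Prop
  | .atom _ _ => True
  | .neg φ => φ.guarded
  | .disj φ ψ => φ.guarded ∧ ψ.guarded
  | .next _ => False
  | .untl _ _ => False
  | .ex _ _ => True
  | .all _ _ => True

/-- A HyperCTL* sentence: no free variables and all temporal operators occur
under a path quantifier. -/
def CTL.IsSentence {AP : Type} (φ : CTL AP) : Prop := φ.freeVars = ∅ ∧ φ.guarded

/-- `S ⊨ φ`: satisfaction w.r.t. the empty assignment, i.e. quantification of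
the first path starts at the initial vertex (for sentences the choice of the
initial dummy path is irrelevant). -/
def CModels {AP : Type} (S : TS AP) (φ : CTL AP) : Prop :=
  ∀ ρ : ℕ → S.V, S.IsPath ρ → ρ 0 = S.vI → φ.sat S (fun _ => ρ) 0

/-- A fixed computable injective encoding of HyperCTL* formulas. -/
def CTL.code : CTL ℕ → ℕ
  | .atom a x => Nat.pair 0 (Nat.pair a x)
  | .neg φ => Nat.pair 1 φ.code
  | .disj φ ψ => Nat.pair 2 (Nat.pair φ.code ψ.code)
  | .next φ => Nat.pair 3 φ.code
  | .untl φ ψ => Nat.pair 4 (Nat.pair φ.code ψ.code)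
  | .ex x φ => Nat.pair 5 (Nat.pair x φ.code)
  | .all x φ => Nat.pair 6 (Nat.pair x φ.code)

/-- `A` many-one reduces to `B` via a total computable function. -/
def ManyOneRed (A B : Set ℕ) : Prop :=
  ∃ f : ℕ → ℕ, Computable f ∧ ∀ x, x ∈ A ↔ f x ∈ B

/-! ### Second-order arithmetic -/

/-- Terms of arithmetic (signature 0,1,+,·) with number variables and
applications of type-1 function variables (second-order objects, equivalently
sets of naturals). -/
inductive ATerm : Type where
  | var : ℕ → ATerm
  | zero : ATerm
  | one : ATerm
  | add : ATerm → ATerm → ATerm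
  | mul : ATerm → ATerm → ATerm
  | app : ℕ → ATerm → ATerm

def ATerm.eval : ATerm → (ℕ → ℕ) → (ℕ → ℕ → ℕ) → ℕ
  | .var x, v, _ => v x
  | .zero, _, _ => 0
  | .one, _, _ => 1
  | .add s t, v, F => s.eval v F + t.eval v F
  | .mul s t, v, F => s.eval v F * t.eval v F
  | .app f t, v, F => F f (t.eval v F)

def ATerm.freeN : ATerm → Set ℕ
  | .var x => {x}
  | .zero => ∅
  | .one => ∅
  | .add s t => s.freeN ∪ t.freeN
  | .mul s t => s.freeN ∪ t.freeN
  | .app _ t => t.freeN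

def ATerm.freeF : ATerm → Set ℕ
  | .var _ => ∅
  | .zero => ∅
  | .one => ∅
  | .add s t => s.freeF ∪ t.freeF
  | .mul s t => s.freeF ∪ t.freeF
  | .app f t => insert f t.freeF

/-- Formulas of second-order arithmetic: quantification over naturals and over
functions ℕ → ℕ (equivalently, sets of naturals). -/
inductive SOForm : Type where
  | eq : ATerm → ATerm → SOForm
  | lt : ATerm → ATerm → SOForm
  | neg : SOForm → SOForm
  | disj : SOForm → SOForm → SOForm
  | exN : ℕ → SOForm → SOForm
  | allN : ℕ → SOForm → SOForm
  | exF : ℕ → SOForm → SOForm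
  | allF : ℕ → SOForm → SOForm

def SOForm.sat : SOForm → (ℕ → ℕ) → (ℕ → ℕ → ℕ) → Prop
  | .eq s t, v, F => s.eval v F = t.eval v F
  | .lt s t, v, F => s.eval v F < t.eval v F
  | .neg φ, v, F => ¬ φ.sat v F
  | .disj φ ψ, v, F => φ.sat v F ∨ ψ.sat v F
  | .exN x φ, v, F => ∃ n : ℕ, φ.sat (Function.update v x n) F
  | .allN x φ, v, F => ∀ n : ℕ, φ.sat (Function.update v x n) F
  | .exF x φ, v, F => ∃ h : ℕ → ℕ, φ.sat v (Function.update F x h)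
  | .allF x φ, v, F => ∀ h : ℕ → ℕ, φ.sat v (Function.update F x h)

def SOForm.freeN : SOForm → Set ℕ
  | .eq s t => s.freeN ∪ t.freeN
  | .lt s t => s.freeN ∪ t.freeN
  | .neg φ => φ.freeN
  | .disj φ ψ => φ.freeN ∪ ψ.freeN
  | .exN x φ => φ.freeN \ {x}
  | .allN x φ => φ.freeN \ {x}
  | .exF _ φ => φ.freeN
  | .allF _ φ => φ.freeN

def SOForm.freeF : SOForm → Set ℕ
  | .eq s t => s.freeF ∪ t.freeF
  | .lt s t => s.freeF ∪ t.freeF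
  | .neg φ => φ.freeF
  | .disj φ ψ => φ.freeF ∪ ψ.freeF
  | .exN _ φ => φ.freeF
  | .allN _ φ => φ.freeF
  | .exF x φ => φ.freeF \ {x}
  | .allF x φ => φ.freeF \ {x}

/-- A sentence of second-order arithmetic. -/
def SOForm.IsSentence (φ : SOForm) : Prop := φ.freeN = ∅ ∧ φ.freeF = ∅

/-- Truth in the standard model of second-order arithmetic. -/
def SOTrue (φ : SOForm) : Prop := φ.sat (fun _ => 0) (fun _ _ => 0)

/-- A fixed computable injective encoding of second-order arithmetic. -/
def ATerm.code : ATerm → ℕ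
  | .var x => Nat.pair 0 x
  | .zero => Nat.pair 1 0
  | .one => Nat.pair 2 0
  | .add s t => Nat.pair 3 (Nat.pair s.code t.code)
  | .mul s t => Nat.pair 4 (Nat.pair s.code t.code)
  | .app f t => Nat.pair 5 (Nat.pair f t.code)

def SOForm.code : SOForm → ℕ
  | .eq s t => Nat.pair 0 (Nat.pair s.code t.code)
  | .lt s t => Nat.pair 1 (Nat.pair s.code t.code)
  | .neg φ => Nat.pair 2 φ.code
  | .disj φ ψ => Nat.pair 3 (Nat.pair φ.code ψ.code)
  | .exN x φ => Nat.pair 4 (Nat.pair x φ.code)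
  | .allN x φ => Nat.pair 5 (Nat.pair x φ.code)
  | .exF x φ => Nat.pair 6 (Nat.pair x φ.code)
  | .allF x φ => Nat.pair 7 (Nat.pair x φ.code)

/-- Codes of HyperCTL* sentences having a countable model. -/
def CTLCountableSatCodes : Set ℕ :=
  {n : ℕ | ∃ φ : CTL ℕ, φ.IsSentence ∧ φ.code = n ∧
    ∃ S : TS ℕ, Countable S.V ∧ CModels S φ}

/-- Codes of HyperCTL* sentences having a finitely-branching model. -/
def CTLFinBranchSatCodes : Set ℕ :=
  {n : ℕ | ∃ φ : CTL ℕ, φ.IsSentence ∧ φ.code = n ∧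
    ∃ S : TS ℕ, (∀ v : S.V, {w : S.V | S.E v w}.Finite) ∧ CModels S φ}

/-- Codes of true sentences of second-order arithmetic. -/
def SOTruthCodes : Set ℕ :=
  {n : ℕ | ∃ φ : SOForm, φ.IsSentence ∧ φ.code = n ∧ SOTrue φ}



/-! ### Part 1: codes, injectivity, computability -/

namespace HyperProof

theorem CTL_code_inj : ∀ φ ψ : CTL ℕ, φ.code = ψ.code → φ = ψ := by
  intro φ
  induction φ with
  | atom a x => intro ψ h; cases ψ <;> simp_all [CTL.code, Nat.pair_eq_pair]
  | neg φ ih => intro ψ h; cases ψ <;> simp [CTL.code, Nat.pair_eq_pair] at h ⊢; exact ih _ h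
  | disj φ ψ ih1 ih2 =>
    intro ψ h; cases ψ <;> simp [CTL.code, Nat.pair_eq_pair] at h ⊢; exact ⟨ih1 _ h.1, ih2 _ h.2⟩
  | next φ ih => intro ψ h; cases ψ <;> simp [CTL.code, Nat.pair_eq_pair] at h ⊢; exact ih _ h
  | untl φ ψ ih1 ih2 =>
    intro ψ h; cases ψ <;> simp [CTL.code, Nat.pair_eq_pair] at h ⊢; exact ⟨ih1 _ h.1, ih2 _ h.2⟩
  | ex x φ ih => intro ψ h; cases ψ <;> simp [CTL.code, Nat.pair_eq_pair] at h ⊢; exact ⟨h.1, ih _ h.2⟩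
  | all x φ ih => intro ψ h; cases ψ <;> simp [CTL.code, Nat.pair_eq_pair] at h ⊢; exact ⟨h.1, ih _ h.2⟩

theorem ATerm_code_inj : ∀ φ ψ : ATerm, φ.code = ψ.code → φ = ψ := by
  intro φ
  induction φ with
  | var a => intro ψ h; cases ψ <;> simp_all [ATerm.code, Nat.pair_eq_pair]
  | zero => intro ψ h; cases ψ <;> simp_all [ATerm.code, Nat.pair_eq_pair]
  | one => intro ψ h; cases ψ <;> simp_all [ATerm.code, Nat.pair_eq_pair]
  | add φ ψ ih1 ih2 =>
    intro ψ h; cases ψ <;> simp [ATerm.code, Nat.pair_eq_pair] at h ⊢; exact ⟨ih1 _ h.1, ih2 _ h.2⟩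
  | mul φ ψ ih1 ih2 =>
    intro ψ h; cases ψ <;> simp [ATerm.code, Nat.pair_eq_pair] at h ⊢; exact ⟨ih1 _ h.1, ih2 _ h.2⟩
  | app x φ ih => intro ψ h; cases ψ <;> simp [ATerm.code, Nat.pair_eq_pair] at h ⊢; exact ⟨h.1, ih _ h.2⟩

theorem SOForm_code_inj : ∀ φ ψ : SOForm, φ.code = ψ.code → φ = ψ := by
  intro φ
  induction φ with
  | eq s t =>
    intro ψ h; cases ψ <;> simp_all [SOForm.code, Nat.pair_eq_pair]
    exact ⟨ATerm_code_inj _ _ h.1, ATerm_code_inj _ _ h.2⟩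
  | lt s t =>
    intro ψ h; cases ψ <;> simp_all [SOForm.code, Nat.pair_eq_pair]
    exact ⟨ATerm_code_inj _ _ h.1, ATerm_code_inj _ _ h.2⟩
  | neg φ ih => intro ψ h; cases ψ <;> simp [SOForm.code, Nat.pair_eq_pair] at h ⊢; exact ih _ h
  | disj φ ψ ih1 ih2 =>
    intro ψ h; cases ψ <;> simp [SOForm.code, Nat.pair_eq_pair] at h ⊢; exact ⟨ih1 _ h.1, ih2 _ h.2⟩
  | exN x φ ih => intro ψ h; cases ψ <;> simp [SOForm.code, Nat.pair_eq_pair] at h ⊢; exact ⟨h.1, ih _ h.2⟩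
  | allN x φ ih => intro ψ h; cases ψ <;> simp [SOForm.code, Nat.pair_eq_pair] at h ⊢; exact ⟨h.1, ih _ h.2⟩
  | exF x φ ih => intro ψ h; cases ψ <;> simp [SOForm.code, Nat.pair_eq_pair] at h ⊢; exact ⟨h.1, ih _ h.2⟩
  | allF x φ ih => intro ψ h; cases ψ <;> simp [SOForm.code, Nat.pair_eq_pair] at h ⊢; exact ⟨h.1, ih _ h.2⟩

/-- Select a branch according to the tag. -/
def sel (B : ℕ → ℕ × ℕ × ℕ × ℕ → ℕ) : ℕ → ℕ → ℕ × ℕ × ℕ × ℕ → ℕ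
  | 0, _, _ => 0
  | K + 1, t, e => if t = K then B K e else sel B K t e

theorem sel_primrec (B : ℕ → ℕ × ℕ × ℕ × ℕ → ℕ) (hB : ∀ k, Primrec (B k)) (K : ℕ) :
    Primrec (fun p : ℕ × (ℕ × ℕ × ℕ × ℕ) => sel B K p.1 p.2) := by
  induction K with
  | zero => exact Primrec.const 0
  | succ K ih =>
    exact Primrec.ite (Primrec.eq.comp Primrec.fst (Primrec.const K))
      ((hB K).comp Primrec.snd) ih

theorem sel_lt (B : ℕ → ℕ × ℕ × ℕ × ℕ → ℕ) (K k : ℕ) (e) (h : k < K) : sel B K k e = B k e := by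
  induction K with
  | zero => omega
  | succ K ih =>
    simp only [sel]
    split
    · next h' => rw [h']
    · exact ih (by omega)

theorem sel_ge (B : ℕ → ℕ × ℕ × ℕ × ℕ → ℕ) (K k : ℕ) (e) (h : K ≤ k) : sel B K k e = 0 := by
  induction K with
  | zero => rfl
  | succ K ih =>
    simp only [sel]
    rw [if_neg (by omega)]
    exact ih (by omega)

/-- One step of the course-of-values recursion on the table of previous values. -/
def stepG (B : ℕ → ℕ × ℕ × ℕ × ℕ → ℕ) (K : ℕ) (L : List ℕ) : ℕ :=
  sel B K L.length.unpair.1 (L.length.unpair.2, L.getD L.length.unpair.2 0,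
    L.getD L.length.unpair.2.unpair.1 0, L.getD L.length.unpair.2.unpair.2 0)

/-- Table of the course-of-values recursion. -/
def tab (B : ℕ → ℕ × ℕ × ℕ × ℕ → ℕ) (K : ℕ) : ℕ → List ℕ
  | 0 => []
  | n + 1 => tab B K n ++ [stepG B K (tab B K n)]

theorem tab_eq (B : ℕ → ℕ × ℕ × ℕ × ℕ → ℕ) (K n : ℕ) :
    tab B K n = (List.range n).map (fun i => stepG B K (tab B K i)) := by
  induction n with
  | zero => rfl
  | succ n ih => rw [List.range_succ, List.map_append, ← ih]; rfl

theorem snd_lt_pair (k m : ℕ) (hk : 1 ≤ k) : m < Nat.pair k m := by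
  have := Nat.add_le_pair k m
  omega

theorem codeRec (K : ℕ) (B0 : ℕ → ℕ) (h0 : Primrec B0) (B : ℕ → ℕ × ℕ × ℕ × ℕ → ℕ)
    (hB : ∀ k, Primrec (B k)) (hK : 1 ≤ K) :
    ∃ h : ℕ → ℕ, Primrec h ∧ (∀ m, h (Nat.pair 0 m) = B0 m) ∧
      (∀ k m, 1 ≤ k → k < K →
        h (Nat.pair k m) = B k (m, h m, h m.unpair.1, h m.unpair.2)) ∧
      (∀ k m, K ≤ k → h (Nat.pair k m) = 0) := by
  set B' : ℕ → ℕ × ℕ × ℕ × ℕ → ℕ := fun k e => if k = 0 then B0 e.1 else B k e with hB'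
  have hB'p : ∀ k, Primrec (B' k) := by
    intro k
    by_cases hk : k = 0
    · subst hk; simpa [hB'] using h0.comp Primrec.fst
    · simpa [hB', hk] using hB k
  set h : ℕ → ℕ := fun n => stepG B' K (tab B' K n) with hh
  have hlen : ∀ n, (tab B' K n).length = n := by intro n; rw [tab_eq]; simp
  have hget : ∀ n i, i < n → (tab B' K n).getD i 0 = h i := by
    intro n i hi
    rw [tab_eq]; simp [List.getD_eq_getElem?_getD, hi, hh]
  have hstep : Primrec (stepG B' K) := by
    have l := (Primrec.list_length (α := ℕ))
    have hd := Primrec.list_getD (α := ℕ) 0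
    have u := Primrec.snd.comp (Primrec.unpair.comp l)
    have u1 := Primrec.fst.comp (Primrec.unpair.comp u)
    have u2 := Primrec.snd.comp (Primrec.unpair.comp u)
    exact (sel_primrec B' hB'p K).comp ((Primrec.fst.comp (Primrec.unpair.comp l)).pair
      (u.pair ((hd.comp Primrec.id u).pair ((hd.comp Primrec.id u1).pair (hd.comp Primrec.id u2)))))
  refine ⟨h, ?_, ?_, ?_, ?_⟩
  · have : Primrec₂ (fun (_ : Unit) n => h n) := by
      refine Primrec.nat_strong_rec _ (g := fun _ L => some (stepG B' K L)) ?_ ?_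
      · exact Primrec.option_some.comp (hstep.comp Primrec.snd)
      · intro a n
        simp only [hh]
        rw [← tab_eq]
    exact this.comp (Primrec.const ()) Primrec.id
  · intro m
    simp only [hh, stepG, hlen, Nat.unpair_pair]
    rw [sel_lt _ _ _ _ (by omega)]
    simp [hB']
  · intro k m hk hkK
    have hm := snd_lt_pair k m hk
    have h1 := Nat.unpair_left_le m
    have h2 := Nat.unpair_right_le m
    show stepG B' K (tab B' K (Nat.pair k m)) = _
    simp only [stepG, hlen, Nat.unpair_pair]
    rw [sel_lt _ _ _ _ hkK, hget _ _ hm, hget _ _ (by omega), hget _ _ (by omega)]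
    simp only [hB', if_neg (show k ≠ 0 by omega)]
  · intro k m hk
    simp only [hh, stepG, hlen, Nat.unpair_pair]
    rw [sel_ge _ _ _ _ hk]

theorem pr_a : Primrec (fun e : ℕ × ℕ × ℕ × ℕ => e.1.unpair.1) :=
  Primrec.fst.comp (Primrec.unpair.comp Primrec.fst)
theorem pr_b : Primrec (fun e : ℕ × ℕ × ℕ × ℕ => e.1.unpair.2) :=
  Primrec.snd.comp (Primrec.unpair.comp Primrec.fst)
theorem pr_hm : Primrec (fun e : ℕ × ℕ × ℕ × ℕ => e.2.1) :=
  Primrec.fst.comp Primrec.snd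
theorem pr_ha : Primrec (fun e : ℕ × ℕ × ℕ × ℕ => e.2.2.1) :=
  Primrec.fst.comp (Primrec.snd.comp Primrec.snd)
theorem pr_hb : Primrec (fun e : ℕ × ℕ × ℕ × ℕ => e.2.2.2) :=
  Primrec.snd.comp (Primrec.snd.comp Primrec.snd)

theorem code_cases {p : ℕ → Prop} (h0 : ∀ m, p (Nat.pair 0 m))
    (hs : ∀ k m, 1 ≤ k → p m → p m.unpair.1 → p m.unpair.2 → p (Nat.pair k m)) : ∀ n, p n := by
  intro n
  induction n using Nat.strong_induction_on with
  | _ n ih =>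
    have e := Nat.pair_unpair n
    rcases Nat.eq_zero_or_pos n.unpair.1 with h | h
    · rw [← e, h]; exact h0 _
    · have := snd_lt_pair n.unpair.1 n.unpair.2 h
      rw [e] at this
      have h1 := Nat.unpair_left_le n.unpair.2
      have h2 := Nat.unpair_right_le n.unpair.2
      rw [← e]
      exact hs _ _ h (ih _ this) (ih _ (by omega)) (ih _ (by omega))

theorem validT : ∃ h : ℕ → ℕ, Primrec h ∧ ∀ n, h n ≠ 0 ↔ ∃ t : ATerm, t.code = n := by
  obtain ⟨h, hp, e0, e1, e2⟩ := codeRec 6 (fun _ => 1) (Primrec.const 1)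
    (fun k e => match k with
      | 1 => if e.1 = 0 then 1 else 0
      | 2 => if e.1 = 0 then 1 else 0
      | 3 => e.2.2.1 * e.2.2.2
      | 4 => e.2.2.1 * e.2.2.2
      | 5 => e.2.2.2
      | _ => 0)
    (by
      intro k
      have hz : Primrec (fun e : ℕ × ℕ × ℕ × ℕ => if e.1 = 0 then 1 else 0) :=
        Primrec.ite (Primrec.eq.comp Primrec.fst (Primrec.const 0)) (Primrec.const 1)
          (Primrec.const 0)
      have hm := Primrec.nat_mul.comp pr_ha pr_hb
      match k with
      | 0 => exact Primrec.const 0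
      | 1 => exact hz
      | 2 => exact hz
      | 3 => exact hm
      | 4 => exact hm
      | 5 => exact pr_hb
      | _ + 6 => exact Primrec.const 0) (by omega)
  refine ⟨h, hp, fun n => ⟨?_, ?_⟩⟩
  · revert n
    refine code_cases ?_ ?_
    · intro m _; exact ⟨.var m, rfl⟩
    · intro k m hk _ ha hb hn
      by_cases hk6 : 6 ≤ k
      · exact absurd (e2 k m hk6) hn
      rw [e1 k m hk (by omega)] at hn
      have em := Nat.pair_unpair m
      obtain rfl | rfl | rfl | rfl | rfl : k = 1 ∨ k = 2 ∨ k = 3 ∨ k = 4 ∨ k = 5 := by omega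
      · have : m = 0 := by simpa using hn
        exact ⟨.zero, by rw [this]; rfl⟩
      · have : m = 0 := by simpa using hn
        exact ⟨.one, by rw [this]; rfl⟩
      · obtain ⟨s, hs⟩ := ha (by simp at hn; exact hn.1)
        obtain ⟨t, ht⟩ := hb (by simp at hn; exact hn.2)
        exact ⟨.add s t, by simp only [ATerm.code, hs, ht, em]⟩
      · obtain ⟨s, hs⟩ := ha (by simp at hn; exact hn.1)
        obtain ⟨t, ht⟩ := hb (by simp at hn; exact hn.2)
        exact ⟨.mul s t, by simp only [ATerm.code, hs, ht, em]⟩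
      · obtain ⟨t, ht⟩ := hb (by simpa using hn)
        exact ⟨.app m.unpair.1 t, by simp only [ATerm.code, ht, em]⟩
  · rintro ⟨t, rfl⟩
    induction t <;> simp_all [ATerm.code]

theorem validSO : ∃ h : ℕ → ℕ, Primrec h ∧ ∀ n, h n ≠ 0 ↔ ∃ t : SOForm, t.code = n := by
  obtain ⟨v, vp, hv⟩ := validT
  have hvp : Primrec (fun m : ℕ => v m.unpair.1 * v m.unpair.2) :=
    Primrec.nat_mul.comp (vp.comp (Primrec.fst.comp Primrec.unpair))
      (vp.comp (Primrec.snd.comp Primrec.unpair))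
  obtain ⟨h, hp, e0, e1, e2⟩ := codeRec 8 _ hvp
    (fun k e => match k with
      | 1 => v e.1.unpair.1 * v e.1.unpair.2
      | 2 => e.2.1
      | 3 => e.2.2.1 * e.2.2.2
      | _ => e.2.2.2)
    (by
      intro k
      match k with
      | 0 => exact pr_hb
      | 1 => exact hvp.comp Primrec.fst
      | 2 => exact pr_hm
      | 3 => exact Primrec.nat_mul.comp pr_ha pr_hb
      | _ + 4 => exact pr_hb) (by omega)
  refine ⟨h, hp, fun n => ⟨?_, ?_⟩⟩
  · revert n
    refine code_cases ?_ ?_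
    · intro m hm
      rw [e0] at hm
      have em := Nat.pair_unpair m
      obtain ⟨s, hs⟩ := (hv m.unpair.1).1 (by simp at hm; exact hm.1)
      obtain ⟨t, ht⟩ := (hv m.unpair.2).1 (by simp at hm; exact hm.2)
      exact ⟨.eq s t, by simp only [SOForm.code, hs, ht, em]⟩
    · intro k m hk hm ha hb hn
      by_cases hk6 : 8 ≤ k
      · exact absurd (e2 k m hk6) hn
      rw [e1 k m hk (by omega)] at hn
      have em := Nat.pair_unpair m
      obtain rfl | rfl | rfl | rfl | rfl | rfl | rfl :
        k = 1 ∨ k = 2 ∨ k = 3 ∨ k = 4 ∨ k = 5 ∨ k = 6 ∨ k = 7 := by omega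
      · obtain ⟨s, hs⟩ := (hv m.unpair.1).1 (by simp at hn; exact hn.1)
        obtain ⟨t, ht⟩ := (hv m.unpair.2).1 (by simp at hn; exact hn.2)
        exact ⟨.lt s t, by simp only [SOForm.code, hs, ht, em]⟩
      · obtain ⟨t, ht⟩ := hm (by simpa using hn)
        exact ⟨.neg t, by simp only [SOForm.code, ht]⟩
      · obtain ⟨s, hs⟩ := ha (by simp at hn; exact hn.1)
        obtain ⟨t, ht⟩ := hb (by simp at hn; exact hn.2)
        exact ⟨.disj s t, by simp only [SOForm.code, hs, ht, em]⟩
      · obtain ⟨t, ht⟩ := hb (by simpa using hn)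
        exact ⟨.exN m.unpair.1 t, by simp only [SOForm.code, ht, em]⟩
      · obtain ⟨t, ht⟩ := hb (by simpa using hn)
        exact ⟨.allN m.unpair.1 t, by simp only [SOForm.code, ht, em]⟩
      · obtain ⟨t, ht⟩ := hb (by simpa using hn)
        exact ⟨.exF m.unpair.1 t, by simp only [SOForm.code, ht, em]⟩
      · obtain ⟨t, ht⟩ := hb (by simpa using hn)
        exact ⟨.allF m.unpair.1 t, by simp only [SOForm.code, ht, em]⟩
  · rintro ⟨t, rfl⟩
    have hv' : ∀ t : ATerm, v t.code ≠ 0 := fun t => (hv _).2 ⟨t, rfl⟩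
    induction t <;> simp_all [SOForm.code]

theorem validCTL : ∃ h : ℕ → ℕ, Primrec h ∧ ∀ n, h n ≠ 0 ↔ ∃ t : CTL ℕ, t.code = n := by
  obtain ⟨h, hp, e0, e1, e2⟩ := codeRec 7 (fun _ => 1) (Primrec.const 1)
    (fun k e => match k with
      | 1 => e.2.1
      | 2 => e.2.2.1 * e.2.2.2
      | 3 => e.2.1
      | 4 => e.2.2.1 * e.2.2.2
      | _ => e.2.2.2)
    (by
      intro k
      have hm := Primrec.nat_mul.comp pr_ha pr_hb
      match k with
      | 0 => exact pr_hb
      | 1 => exact pr_hm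
      | 2 => exact hm
      | 3 => exact pr_hm
      | 4 => exact hm
      | _ + 5 => exact pr_hb) (by omega)
  refine ⟨h, hp, fun n => ⟨?_, ?_⟩⟩
  · revert n
    refine code_cases ?_ ?_
    · intro m _; exact ⟨.atom m.unpair.1 m.unpair.2, by simp only [CTL.code, Nat.pair_unpair]⟩
    · intro k m hk hm ha hb hn
      by_cases hk6 : 7 ≤ k
      · exact absurd (e2 k m hk6) hn
      rw [e1 k m hk (by omega)] at hn
      have em := Nat.pair_unpair m
      obtain rfl | rfl | rfl | rfl | rfl | rfl :
        k = 1 ∨ k = 2 ∨ k = 3 ∨ k = 4 ∨ k = 5 ∨ k = 6 := by omega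
      · obtain ⟨t, ht⟩ := hm (by simpa using hn)
        exact ⟨.neg t, by simp only [CTL.code, ht]⟩
      · obtain ⟨s, hs⟩ := ha (by simp at hn; exact hn.1)
        obtain ⟨t, ht⟩ := hb (by simp at hn; exact hn.2)
        exact ⟨.disj s t, by simp only [CTL.code, hs, ht, em]⟩
      · obtain ⟨t, ht⟩ := hm (by simpa using hn)
        exact ⟨.next t, by simp only [CTL.code, ht]⟩
      · obtain ⟨s, hs⟩ := ha (by simp at hn; exact hn.1)
        obtain ⟨t, ht⟩ := hb (by simp at hn; exact hn.2)
        exact ⟨.untl s t, by simp only [CTL.code, hs, ht, em]⟩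
      · obtain ⟨t, ht⟩ := hb (by simpa using hn)
        exact ⟨.ex m.unpair.1 t, by simp only [CTL.code, ht, em]⟩
      · obtain ⟨t, ht⟩ := hb (by simpa using hn)
        exact ⟨.all m.unpair.1 t, by simp only [CTL.code, ht, em]⟩
  · rintro ⟨t, rfl⟩
    induction t <;> simp_all [CTL.code]

theorem guardCTL : ∃ h : ℕ → ℕ, Primrec h ∧ ∀ φ : CTL ℕ, h φ.code ≠ 0 ↔ φ.guarded := by
  obtain ⟨h, hp, e0, e1, e2⟩ := codeRec 7 (fun _ => 1) (Primrec.const 1)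
    (fun k e => match k with
      | 1 => e.2.1
      | 2 => e.2.2.1 * e.2.2.2
      | 3 => 0
      | 4 => 0
      | _ => 1)
    (by
      intro k
      match k with
      | 0 => exact Primrec.const 1
      | 1 => exact pr_hm
      | 2 => exact Primrec.nat_mul.comp pr_ha pr_hb
      | 3 => exact Primrec.const 0
      | 4 => exact Primrec.const 0
      | _ + 5 => exact Primrec.const 1) (by omega)
  refine ⟨h, hp, fun t => ?_⟩
  induction t <;> simp_all [CTL.code, CTL.guarded]

/-- Assemble a reduction. -/
theorem mkRed {α β : Type} (cα : α → ℕ) (cβ : β → ℕ) (hβ : ∀ x y, cβ x = cβ y → x = y)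
    (A : α → Prop) (B : β → Prop) (hα : ∀ x y, cα x = cα y → x = y)
    (v : ℕ → ℕ) (vp : Primrec v) (hv : ∀ n, v n ≠ 0 ↔ ∃ a, cα a = n)
    (g : ℕ → ℕ) (gp : Primrec g) (hg : ∀ a, g (cα a) ≠ 0 ∨ ¬ A a)
    (tr : α → β) (h : ℕ → ℕ) (hp : Primrec h) (he : ∀ a, h (cα a) = cβ (tr a))
    (b0 : β) (hb0 : ¬ B b0) (hAB : ∀ a, g (cα a) ≠ 0 → (A a ↔ B (tr a))) :
    ManyOneRed {n | ∃ a, A a ∧ cα a = n} {n | ∃ b, B b ∧ cβ b = n} := by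
  refine ⟨fun n => if v n = 0 then cβ b0 else if g n = 0 then cβ b0 else h n, ?_, ?_⟩
  · exact (Primrec.ite (Primrec.eq.comp vp (Primrec.const 0)) (Primrec.const _)
      (Primrec.ite (Primrec.eq.comp gp (Primrec.const 0)) (Primrec.const _) hp)).to_comp
  · intro n
    have hb : ¬ ∃ b, B b ∧ cβ b = cβ b0 := by
      rintro ⟨b, hB, e⟩; rw [hβ _ _ e] at hB; exact hb0 hB
    by_cases h1 : v n = 0
    · have : ¬ ∃ a, cα a = n := by rw [← hv]; simp [h1]
      simp only [h1, if_true, Set.mem_ofPred_eq]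
      exact ⟨fun ⟨a, _, ha⟩ => absurd ⟨a, ha⟩ this, fun h => absurd h hb⟩
    · obtain ⟨a, rfl⟩ := (hv n).1 h1
      have hL : (∃ a', A a' ∧ cα a' = cα a) ↔ A a :=
        ⟨fun ⟨a', h, e⟩ => hα _ _ e ▸ h, fun h => ⟨a, h, rfl⟩⟩
      by_cases h2 : g (cα a) = 0
      · simp only [h1, h2, if_true, if_false, Set.mem_ofPred_eq]
        rw [hL]
        rcases hg a with h | h
        · exact absurd h2 h
        · exact ⟨fun h' => absurd h' h, fun h' => absurd h' hb⟩
      · simp only [h1, h2, if_false, Set.mem_ofPred_eq, he]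
        rw [hL, hAB a h2]
        exact ⟨fun h => ⟨_, h, rfl⟩, fun ⟨b, h, e⟩ => hβ _ _ e ▸ h⟩

theorem ManyOneRed_trans {A B C : Set ℕ} (h1 : ManyOneRed A B) (h2 : ManyOneRed B C) :
    ManyOneRed A C := by
  obtain ⟨f, hf, e⟩ := h1
  obtain ⟨g, hg, e'⟩ := h2
  exact ⟨fun n => g (f n), hg.comp hf, fun x => (e x).trans (e' _)⟩

end HyperProof

set_option linter.unusedSimpArgs false

/-! ### Part 2: from HyperCTL* to second-order arithmetic -/

namespace HyperProof

def sAnd (φ ψ : SOForm) : SOForm := .neg (.disj (.neg φ) (.neg ψ))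
def sImp (φ ψ : SOForm) : SOForm := .disj (.neg φ) ψ

theorem sAnd_sat (φ ψ : SOForm) (v F) : (sAnd φ ψ).sat v F ↔ φ.sat v F ∧ ψ.sat v F := by
  simp [sAnd, SOForm.sat]

theorem sImp_sat (φ ψ : SOForm) (v F) : (sImp φ ψ).sat v F ↔ (φ.sat v F → ψ.sat v F) := by
  simp only [sImp, SOForm.sat]; tauto

/-- Injective polynomial pairing. -/
def pp (x y : ℕ) : ℕ := (x + y) * (x + y) + x

theorem pp_inj {x y x' y' : ℕ} (h : pp x y = pp x' y') : x = x' ∧ y = y' := by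
  unfold pp at h
  have : x + y = x' + y' := by
    rcases lt_trichotomy (x + y) (x' + y') with h1 | h1 | h1
    · nlinarith
    · exact h1
    · nlinarith
  rw [this] at h
  omega

def ppT (s t : ATerm) : ATerm := .add (.mul (.add s t) (.add s t)) s

theorem ppT_eval (s t : ATerm) (v F) : (ppT s t).eval v F = pp (s.eval v F) (t.eval v F) := rfl

def numeral : ℕ → ATerm
  | 0 => .zero
  | n + 1 => .add (numeral n) .one

theorem numeral_eval (n : ℕ) (v F) : (numeral n).eval v F = n := by
  induction n with
  | zero => rfl
  | succ n ih => simp [numeral, ATerm.eval, ih]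

def edgeF (s t : ATerm) : SOForm := .eq (.app 1 (ppT s t)) .zero
def geF (s t : ATerm) : SOForm := .neg (.lt s t)

/-- The function `0` is a path from time `v0` on. -/
def pathF : SOForm :=
  .allN 2 (sImp (geF (.var 2) (.var 0))
    (edgeF (.app 0 (.var 2)) (.app 0 (.add (.var 2) .one))))

def atC (a x : ℕ) : SOForm := .eq (.app 2 (ppT (numeral a) (.app (4 + x) (.var 0)))) .zero
def atTime (k : ℕ) (X : SOForm) : SOForm := .exN 0 (sAnd (.eq (.var 0) (.var k)) X)
def nextC (X : SOForm) : SOForm :=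
  .exN 1 (sAnd (.eq (.var 1) (.add (.var 0) .one)) (atTime 1 X))
def untlC (X Y : SOForm) : SOForm :=
  .exN 1 (sAnd (geF (.var 1) (.var 0)) (sAnd (atTime 1 Y)
    (.allN 2 (sImp (sAnd (geF (.var 2) (.var 0)) (.lt (.var 2) (.var 1))) (atTime 2 X)))))
def exC (x : ℕ) (X : SOForm) : SOForm :=
  .exN 1 (sAnd (.eq (.var 1) (.app 0 (.var 0))) (.exF 0 (sAnd pathF
    (sAnd (.eq (.app 0 (.var 0)) (.var 1))
      (.exF (4 + x) (sAnd (.allN 2 (.eq (.app 0 (.var 2)) (.app (4 + x) (.var 2)))) X))))))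

def trC : CTL ℕ → SOForm
  | .atom a x => atC a x
  | .neg φ => .neg (trC φ)
  | .disj φ ψ => .disj (trC φ) (trC ψ)
  | .next φ => nextC (trC φ)
  | .untl φ ψ => untlC (trC φ) (trC ψ)
  | .ex x φ => exC x (trC φ)
  | .all x φ => .neg (exC x (.neg (trC φ)))

def serialF : SOForm := .allN 1 (.exN 2 (edgeF (.var 1) (.var 2)))
def finF : SOForm :=
  .allN 1 (.allN 2 (sImp (edgeF (.var 1) (.var 2)) (.lt (.var 2) (.app 3 (.var 1)))))
def ttF : SOForm := .eq .zero .zero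

def closeC (b : SOForm) (X : SOForm) : SOForm :=
  .exF 1 (.exF 2 (.exF 3 (.exN 3 (sAnd serialF (sAnd b
    (.exN 0 (sAnd (.eq (.var 0) .zero)
      (.allF 0 (sImp (sAnd pathF (.eq (.app 0 (.var 0)) (.var 3))) X)))))))))

/-- Transition systems on the naturals. -/
abbrev tsOf (E L : ℕ → ℕ → Prop) (vI : ℕ) (hs : ∀ v, ∃ w, E v w) : TS ℕ where
  V := ℕ
  E := E
  vI := vI
  lab := fun v => {a | L v a}
  succ := hs

theorem atTime_sat (k : ℕ) (X : SOForm) (v F) (hk : k ≠ 0) :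
    (atTime k X).sat v F ↔ X.sat (Function.update v 0 (v k)) F := by
  simp [atTime, SOForm.sat, sAnd_sat, ATerm.eval, hk]

theorem exC_sat {E L : ℕ → ℕ → Prop} {vI : ℕ} {hs : ∀ v, ∃ w, E v w} (x : ℕ) (X : SOForm)
    (P : (ℕ → ℕ) → Prop) (As : ℕ → ℕ → ℕ) (r : ℕ) (v : ℕ → ℕ) (F : ℕ → ℕ → ℕ)
    (hE : ∀ x y, E x y ↔ F 1 (pp x y) = 0) (hr : ∀ i, As r i = F 0 (v 0 + i))
    (H : ∀ y f ρ, (∀ i, ρ i = f (v 0 + i)) → (P ρ ↔ X.sat (Function.update v 1 y)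
      (Function.update (Function.update F 0 f) (4 + x) f))) :
    (∃ ρ : ℕ → ℕ, (tsOf E L vI hs).IsPath ρ ∧ ρ 0 = As r 0 ∧ P ρ) ↔ (exC x X).sat v F := by
  have h0 := hr 0
  simp only [Nat.add_zero] at h0
  simp only [exC, SOForm.sat, sAnd_sat, pathF, sImp_sat, geF, edgeF, ATerm.eval, ppT_eval]
  simp only [Function.update_self, ne_eq, OfNat.ofNat_ne_zero, not_false_eq_true, not_lt,
    Function.update_of_ne, OfNat.zero_ne_ofNat, one_ne_zero, zero_ne_one, OfNat.one_ne_ofNat]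
  constructor
  · rintro ⟨ρ, hρ, h1, h2⟩
    have hk : ∀ i, ρ i = (fun k => ρ (k - v 0)) (v 0 + i) := by intro i; simp
    refine ⟨_, rfl, fun k => ρ (k - v 0), ?_, ?_, fun k => ρ (k - v 0), ?_, ?_⟩
    · intro n hn
      rw [← hE]
      have := hρ (n - v 0)
      have e : n + 1 - v 0 = n - v 0 + 1 := by omega
      show E (ρ (n - v 0)) (ρ (n + 1 - v 0))
      rw [e]
      exact this
    · simpa using h1.trans h0
    · intro n
      rw [Function.update_of_ne (by omega)]
      simp
    · exact (H _ _ ρ hk).1 h2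
  · rintro ⟨y, rfl, f, hp, hf, g, hg, hX⟩
    have : g = f := by
      funext n
      have := hg n
      rw [Function.update_of_ne (by omega)] at this
      simp at this
      exact this.symm
    subst this
    refine ⟨fun i => g (v 0 + i), ?_, ?_, ?_⟩
    · intro i
      have := hp (v 0 + i) (by omega)
      rw [← hE] at this
      exact this
    · simpa using hf.trans h0.symm
    · exact (H _ g _ (fun _ => rfl)).2 hX

theorem trC_sat {E L : ℕ → ℕ → Prop} {vI : ℕ} {hs : ∀ v, ∃ w, E v w} (φ : CTL ℕ) :
    ∀ (As : ℕ → ℕ → ℕ) (r : ℕ) (v : ℕ → ℕ) (F : ℕ → ℕ → ℕ),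
    (∀ x y, E x y ↔ F 1 (pp x y) = 0) → (∀ a x, L x a ↔ F 2 (pp a x) = 0) →
    (∀ i, As r i = F 0 (v 0 + i)) →
    (∀ x ∈ φ.freeVars, ∀ i, As x i = F (4 + x) (v 0 + i)) →
    (φ.sat (tsOf E L vI hs) As r ↔ (trC φ).sat v F) := by
  induction φ with
  | atom a x =>
    intro As r v F hE hL hr hx
    have := hx x (by simp [CTL.freeVars]) 0
    simp only [Nat.add_zero] at this
    simp only [trC, atC, SOForm.sat, ATerm.eval, ppT_eval, numeral_eval, CTL.sat]
    rw [← hL, ← this]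
    rfl
  | neg φ ih =>
    intro As r v F hE hL hr hx
    simp only [trC, SOForm.sat, CTL.sat]
    rw [ih As r v F hE hL hr hx]
  | disj φ ψ ih1 ih2 =>
    intro As r v F hE hL hr hx
    simp only [trC, SOForm.sat, CTL.sat]
    rw [ih1 As r v F hE hL hr (fun x h => hx x (Or.inl h)),
      ih2 As r v F hE hL hr (fun x h => hx x (Or.inr h))]
  | next φ ih =>
    intro As r v F hE hL hr hx
    simp only [trC, nextC, SOForm.sat, CTL.sat, sAnd_sat, ATerm.eval]
    rw [ih _ r (Function.update (Function.update v 1 (v 0 + 1)) 0 (v 0 + 1)) F hE hL]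
    · constructor
      · intro h
        refine ⟨v 0 + 1, by simp, ?_⟩
        rw [atTime_sat _ _ _ _ (by simp)]
        simpa using h
      · rintro ⟨n, hn, h⟩
        rw [atTime_sat _ _ _ _ (by simp)] at h
        simp at hn
        subst hn
        simpa using h
    · intro i; simp only [hr, Function.update_self]; congr 1; omega
    · intro x h i; simp only [hx x h, Function.update_self]; congr 1; omega
  | untl φ ψ ih1 ih2 =>
    intro As r v F hE hL hr hx
    have k1 : ∀ j (w : ℕ → ℕ), w 0 = v 0 + j → (φ.sat (tsOf E L vI hs)
        (fun x i => As x (i + j)) r ↔ (trC φ).sat w F) := by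
      intro j w hw
      refine ih1 _ r w F hE hL ?_ ?_
      · intro i; simp only [hw, hr]; congr 1; omega
      · intro x h i; simp only [hw, hx x (Or.inl h)]; congr 1; omega
    have k2 : ∀ j (w : ℕ → ℕ), w 0 = v 0 + j → (ψ.sat (tsOf E L vI hs)
        (fun x i => As x (i + j)) r ↔ (trC ψ).sat w F) := by
      intro j w hw
      refine ih2 _ r w F hE hL ?_ ?_
      · intro i; simp only [hw, hr]; congr 1; omega
      · intro x h i; simp only [hw, hx x (Or.inr h)]; congr 1; omega
    simp only [trC, untlC, SOForm.sat, CTL.sat, sAnd_sat, ATerm.eval, sImp_sat, geF,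
      atTime_sat _ _ _ _ (one_ne_zero), atTime_sat _ _ _ _ (two_ne_zero)]
    simp only [Function.update_self, ne_eq, OfNat.ofNat_ne_zero, not_false_eq_true, not_lt,
      Function.update_of_ne, OfNat.zero_ne_ofNat, one_ne_zero, zero_ne_one, OfNat.one_ne_ofNat]
    constructor
    · rintro ⟨j, h1, h2⟩
      refine ⟨v 0 + j, by omega, (k2 j _ (by simp)).1 h1, ?_⟩
      intro n hn
      refine (k1 (n - v 0) _ (by simp; omega)).1 (h2 _ (by omega))
    · rintro ⟨n, hn, h1, h2⟩
      refine ⟨n - v 0, (k2 _ _ (by simp; omega)).2 h1, ?_⟩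
      intro j hj
      exact (k1 j _ (by simp)).2 (h2 (v 0 + j) (by omega))
  | ex x φ ih =>
    intro As r v F hE hL hr hx
    refine exC_sat x (trC φ) (fun ρ => φ.sat (tsOf E L vI hs) (Function.update As x ρ) x)
      As r v F hE hr ?_
    intro y f ρ hρ
    refine ih _ x _ _ ?_ ?_ ?_ ?_
    · intro a b; rw [Function.update_of_ne (by omega), Function.update_of_ne (by omega)]; exact hE a b
    · intro a b; rw [Function.update_of_ne (by omega), Function.update_of_ne (by omega)]; exact hL a b
    · intro i; rw [Function.update_self, Function.update_of_ne (show (0:ℕ) ≠ 4 + x by omega)]; simp [hρ]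
    · intro z hz i
      by_cases h : z = x
      · subst h; simp [hρ]
      · rw [Function.update_of_ne h, Function.update_of_ne (by omega),
          Function.update_of_ne (by omega)]
        simpa using hx z ⟨hz, h⟩ i
  | all x φ ih =>
    intro As r v F hE hL hr hx
    simp only [trC, SOForm.sat, CTL.sat]
    rw [← exC_sat (hs := hs) (L := L) (vI := vI) x (.neg (trC φ))
      (fun ρ => ¬ φ.sat (tsOf E L vI hs) (Function.update As x ρ) x) As r v F hE hr ?_]
    · push Not
      rfl
    intro y f ρ hρ
    simp only [SOForm.sat]
    rw [ih _ x]
    · intro a b; rw [Function.update_of_ne (by omega), Function.update_of_ne (by omega)]; exact hE a b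
    · intro a b; rw [Function.update_of_ne (by omega), Function.update_of_ne (by omega)]; exact hL a b
    · intro i; rw [Function.update_self, Function.update_of_ne (show (0:ℕ) ≠ 4 + x by omega)]; simp [hρ]
    · intro z hz i
      by_cases h : z = x
      · subst h; simp [hρ]
      · rw [Function.update_of_ne h, Function.update_of_ne (by omega),
          Function.update_of_ne (by omega)]
        simpa using hx z ⟨hz, h⟩ i

theorem exists_pp (R : ℕ → ℕ → Prop) : ∃ f : ℕ → ℕ, ∀ x y, R x y ↔ f (pp x y) = 0 := by
  classical
  refine ⟨fun n => if ∃ x y, n = pp x y ∧ R x y then 0 else 1, fun x y => ?_⟩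
  constructor
  · intro h; exact if_pos ⟨x, y, rfl, h⟩
  · intro h
    by_contra hn
    have : ¬ ∃ x' y', pp x y = pp x' y' ∧ R x' y' := by
      rintro ⟨x', y', e, h'⟩
      obtain ⟨rfl, rfl⟩ := pp_inj e
      exact hn h'
    simp [this] at h

/-- `Q = True` is used for the finitely branching variant. -/
theorem closeC_sat (φ : CTL ℕ) (hφ : φ.freeVars = ∅) (b : SOForm) (Q : Prop)
    (hb : ∀ v F, b.sat v F ↔ (Q → ∀ x y, F 1 (pp x y) = 0 → y < F 3 x)) (v F) :
    (closeC b (trC φ)).sat v F ↔ ∃ (E L : ℕ → ℕ → Prop) (vI : ℕ) (hs : ∀ v, ∃ w, E v w),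
      (Q → ∃ B : ℕ → ℕ, ∀ x y, E x y → y < B x) ∧ CModels (tsOf E L vI hs) φ := by
  simp only [closeC, SOForm.sat, sAnd_sat, hb, serialF, edgeF, ATerm.eval, ppT_eval, sImp_sat,
    pathF, geF]
  simp only [Function.update_self, ne_eq, OfNat.ofNat_ne_zero, not_false_eq_true, not_lt,
    Function.update_of_ne, OfNat.zero_ne_ofNat, one_ne_zero, zero_ne_one, OfNat.one_ne_ofNat,
    OfNat.ofNat_ne_one, exists_eq_left, zero_le, forall_const, show (1 : ℕ) ≠ 3 by decide,
    show (1 : ℕ) ≠ 2 by decide, show (3 : ℕ) ≠ 0 by decide, show (0 : ℕ) ≠ 3 by decide]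
  constructor
  · rintro ⟨e, l, B, vI, hs, hq, hm⟩
    refine ⟨fun x y => e (pp x y) = 0, fun x a => l (pp a x) = 0, vI, hs, ?_, ?_⟩
    · intro q; exact ⟨B, hq q⟩
    · intro ρ hρ h0
      rw [trC_sat]
      · exact hm ρ ⟨fun n => hρ n, h0⟩
      · intro x y; simp
      · intro x y; simp
      · intro i; simp
      · intro x hx; rw [hφ] at hx; exact hx.elim
  · rintro ⟨E, L, vI, hs, hq, hm⟩
    obtain ⟨e, he⟩ := exists_pp E
    obtain ⟨l, hl⟩ := exists_pp (fun a x => L x a)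
    have : ∃ B : ℕ → ℕ, Q → ∀ x y, E x y → y < B x := by
      by_cases q : Q
      · obtain ⟨B, hB⟩ := hq q; exact ⟨B, fun _ => hB⟩
      · exact ⟨fun _ => 0, fun h => absurd h q⟩
    obtain ⟨B, hB⟩ := this
    refine ⟨e, l, B, vI, ?_, ?_, ?_⟩
    · intro x; obtain ⟨w, hw⟩ := hs x; exact ⟨w, (he _ _).1 hw⟩
    · intro q x y h; exact hB q x y ((he _ _).2 h)
    · rintro f ⟨hp, h0⟩
      have := hm f (fun n => (he _ _).2 (hp n)) h0
      rw [trC_sat] at this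
      · exact this
      · intro x y; simp [he]
      · intro x y; simp [hl]
      · intro i; simp
      · intro x hx; rw [hφ] at hx; exact hx.elim

end HyperProof


/-! ### Part 3: bounded morphisms and models on the naturals -/

namespace HyperProof

theorem lift_path (S S' : TS ℕ) (g : S'.V → S.V)
    (back : ∀ m w, S.E (g m) w → ∃ n, S'.E m n ∧ g n = w)
    (m : S'.V) (ρ : ℕ → S.V) (hρ : S.IsPath ρ) (h0 : ρ 0 = g m) :
    ∃ σ : ℕ → S'.V, S'.IsPath σ ∧ σ 0 = m ∧ ∀ i, g (σ i) = ρ i := by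
  classical
  have : ∀ (i : ℕ) (x : {x : S'.V // g x = ρ i}), ∃ y : {y : S'.V // g y = ρ (i + 1)},
      S'.E x.1 y.1 := by
    rintro i ⟨x, hx⟩
    obtain ⟨n, hn, e⟩ := back x (ρ (i + 1)) (by rw [hx]; exact hρ i)
    exact ⟨⟨n, e⟩, hn⟩
  choose nx hnx using this
  let σ : (i : ℕ) → {x : S'.V // g x = ρ i} := fun i => Nat.rec ⟨m, h0.symm⟩ (fun i x => nx i x) i
  refine ⟨fun i => (σ i).1, ?_, rfl, fun i => (σ i).2⟩
  intro i
  exact hnx i (σ i)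

theorem bisim_sat (S S' : TS ℕ) (g : S'.V → S.V)
    (forth : ∀ m n, S'.E m n → S.E (g m) (g n))
    (back : ∀ m w, S.E (g m) w → ∃ n, S'.E m n ∧ g n = w)
    (hl : ∀ m, S'.lab m = S.lab (g m)) (φ : CTL ℕ) :
    ∀ (As : ℕ → ℕ → S'.V) (r : ℕ),
      φ.sat S' As r ↔ φ.sat S (fun x i => g (As x i)) r := by
  have hu : ∀ (As : ℕ → ℕ → S'.V) x (σ : ℕ → S'.V),
      (fun y i => g (Function.update As x σ y i)) =
        Function.update (fun y i => g (As y i)) x (fun i => g (σ i)) := by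
    intro As x σ
    funext y i
    by_cases h : y = x
    · subst h; simp
    · simp [h]
  induction φ with
  | atom a x => intro As r; simp only [CTL.sat, hl]
  | neg φ ih => intro As r; simp only [CTL.sat]; rw [ih]
  | disj φ ψ ih1 ih2 => intro As r; simp only [CTL.sat]; rw [ih1, ih2]
  | next φ ih => intro As r; simp only [CTL.sat]; rw [ih]
  | untl φ ψ ih1 ih2 => intro As r; simp only [CTL.sat, ih1, ih2]
  | ex x φ ih =>
    intro As r; simp only [CTL.sat]
    constructor
    · rintro ⟨σ, hσ, h0, h⟩
      refine ⟨fun i => g (σ i), fun i => forth _ _ (hσ i), by simp [h0], ?_⟩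
      rw [ih, hu] at h
      exact h
    · rintro ⟨ρ, hρ, h0, h⟩
      obtain ⟨σ, hσ, h0', e⟩ := lift_path S S' g back _ ρ hρ h0
      refine ⟨σ, hσ, h0', ?_⟩
      rw [ih, hu]
      rw [show (fun i => g (σ i)) = ρ from funext e]
      exact h
  | all x φ ih =>
    intro As r; simp only [CTL.sat]
    constructor
    · intro H ρ hρ h0
      obtain ⟨σ, hσ, h0', e⟩ := lift_path S S' g back _ ρ hρ h0
      have h := H σ hσ h0'
      rw [ih, hu] at h
      rw [show (fun i => g (σ i)) = ρ from funext e] at h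
      exact h
    · intro H σ hσ h0
      have h := H (fun i => g (σ i)) (fun i => forth _ _ (hσ i)) (by simp [h0])
      rw [ih, hu]
      exact h

theorem bisim_models (S S' : TS ℕ) (g : S'.V → S.V)
    (forth : ∀ m n, S'.E m n → S.E (g m) (g n))
    (back : ∀ m w, S.E (g m) w → ∃ n, S'.E m n ∧ g n = w)
    (hl : ∀ m, S'.lab m = S.lab (g m)) (hI : g S'.vI = S.vI) (φ : CTL ℕ) :
    CModels S φ ↔ CModels S' φ := by
  constructor
  · intro H σ hσ h0
    rw [bisim_sat S S' g forth back hl]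
    exact H (fun i => g (σ i)) (fun i => forth _ _ (hσ i)) (by simp [h0, hI])
  · intro H ρ hρ h0
    obtain ⟨σ, hσ, h0', e⟩ := lift_path S S' g back S'.vI ρ hρ (by rw [h0, hI])
    have := H σ hσ h0'
    rw [bisim_sat S S' g forth back hl] at this
    simpa only [e] using this

/-- From a countable successor-closed part of a system to a system on the naturals. -/
theorem toNat (S : TS ℕ) (W : Set S.V) (hW : W.Countable) (hI : S.vI ∈ W)
    (hc : ∀ v ∈ W, ∀ w, S.E v w → w ∈ W) (φ : CTL ℕ) (hm : CModels S φ) :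
    ∃ (E L : ℕ → ℕ → Prop) (vI : ℕ) (hs : ∀ v, ∃ w, E v w),
      ((∀ v, {w | S.E v w}.Finite) → ∃ B : ℕ → ℕ, ∀ x y, E x y → y < B x) ∧
      CModels (tsOf E L vI hs) φ := by
  classical
  haveI : Countable W := hW
  haveI : Nonempty W := ⟨⟨S.vI, hI⟩⟩
  haveI : Encodable (W × ℕ) := Encodable.ofCountable _
  haveI : Denumerable (W × ℕ) := Denumerable.ofEncodableOfInfinite _
  let e : W × ℕ ≃ ℕ := Denumerable.eqv _
  let E : ℕ → ℕ → Prop := fun m n => S.E (e.symm m).1 (e.symm n).1 ∧ (e.symm n).2 = 0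
  let L : ℕ → ℕ → Prop := fun m a => a ∈ S.lab (e.symm m).1
  have hs : ∀ m, ∃ n, E m n := by
    intro m
    obtain ⟨w, hw⟩ := S.succ (e.symm m).1
    refine ⟨e (⟨w, hc _ (e.symm m).1.2 _ hw⟩, 0), ?_⟩
    simp [E, hw]
  refine ⟨E, L, e (⟨S.vI, hI⟩, 0), hs, ?_, ?_⟩
  · intro hf
    have : ∀ m, ∃ b, ∀ n, E m n → n < b := by
      intro m
      have hfin : {n | E m n}.Finite := by
        have : Set.InjOn (fun n => ((e.symm n).1 : S.V)) {n | E m n} := by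
          intro a ha b hb hab
          apply e.symm.injective
          apply Prod.ext
          · exact Subtype.ext hab
          · rw [ha.2, hb.2]
        refine Set.Finite.of_finite_image (f := fun n => ((e.symm n).1 : S.V)) ?_ this
        refine (hf (e.symm m).1).subset ?_
        rintro _ ⟨n, hn, rfl⟩
        exact hn.1
      obtain ⟨b, hb⟩ := hfin.bddAbove
      exact ⟨b + 1, fun n hn => Nat.lt_succ_of_le (hb hn)⟩
    choose B hB using this
    exact ⟨B, hB⟩
  · refine (bisim_models S (tsOf E L _ hs) (fun m => ((e.symm m).1 : S.V)) ?_ ?_ ?_ ?_ φ).1 hm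
    · intro m n h; exact h.1
    · intro m w hw
      refine ⟨e (⟨w, hc _ (e.symm m).1.2 _ hw⟩, 0), ?_, ?_⟩
      · exact ⟨by simpa using hw, by simp⟩
      · simp
    · intro m; rfl
    · simp

theorem reach_countable (S : TS ℕ) (hf : ∀ v, {w | S.E v w}.Finite) :
    {w | Relation.ReflTransGen S.E S.vI w}.Countable := by
  classical
  let lev : ℕ → Set S.V := fun n => Nat.rec {S.vI} (fun _ A => ⋃ v ∈ A, {w | S.E v w}) n
  have hl : ∀ n, (lev n).Finite := by
    intro n
    induction n with
    | zero => exact Set.finite_singleton _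
    | succ n ih => exact Set.Finite.biUnion ih (fun v _ => hf v)
  refine (Set.countable_iUnion (fun n => (hl n).countable)).mono ?_
  intro w hw
  have hw' : Relation.ReflTransGen S.E S.vI w := hw
  rw [Set.mem_iUnion]
  induction hw' with
  | refl => exact ⟨0, rfl⟩
  | tail h1 h2 ih =>
    obtain ⟨n, hn⟩ := ih h1
    refine ⟨n + 1, ?_⟩
    exact Set.mem_biUnion hn h2

theorem countable_iff (φ : CTL ℕ) :
    (∃ S : TS ℕ, Countable S.V ∧ CModels S φ) ↔
    ∃ (E L : ℕ → ℕ → Prop) (vI : ℕ) (hs : ∀ v, ∃ w, E v w),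
      (False → ∃ B : ℕ → ℕ, ∀ x y, E x y → y < B x) ∧ CModels (tsOf E L vI hs) φ := by
  constructor
  · rintro ⟨S, hS, hm⟩
    obtain ⟨E, L, vI, hs, -, h⟩ := toNat S Set.univ (Set.countable_univ) trivial
      (fun _ _ _ _ => trivial) φ hm
    exact ⟨E, L, vI, hs, False.elim, h⟩
  · rintro ⟨E, L, vI, hs, -, h⟩
    exact ⟨_, inferInstanceAs (Countable ℕ), h⟩

theorem fin_iff (φ : CTL ℕ) :
    (∃ S : TS ℕ, (∀ v : S.V, {w : S.V | S.E v w}.Finite) ∧ CModels S φ) ↔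
    ∃ (E L : ℕ → ℕ → Prop) (vI : ℕ) (hs : ∀ v, ∃ w, E v w),
      (True → ∃ B : ℕ → ℕ, ∀ x y, E x y → y < B x) ∧ CModels (tsOf E L vI hs) φ := by
  constructor
  · rintro ⟨S, hS, hm⟩
    obtain ⟨E, L, vI, hs, hB, h⟩ := toNat S _ (reach_countable S hS) Relation.ReflTransGen.refl
      (fun v hv w hw => Relation.ReflTransGen.tail hv hw) φ hm
    exact ⟨E, L, vI, hs, fun _ => hB hS, h⟩
  · rintro ⟨E, L, vI, hs, hB, h⟩
    obtain ⟨B, hB⟩ := hB trivial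
    refine ⟨_, ?_, h⟩
    intro v
    exact (Set.finite_lt_nat (B v)).subset (fun w hw => hB v w hw)

end HyperProof

set_option linter.unusedSimpArgs false

/-! ### Part 4: computability and free variables of the translation to arithmetic -/

namespace HyperProof

/-- Term templates with primitive recursive code. -/
def TC (T : ℕ → ATerm) : Prop := Primrec (fun n => (T n).code)

theorem pr_pairc {α : Type} [Primcodable α] (k : ℕ) {f : α → ℕ} (hf : Primrec f) :
    Primrec (fun a => Nat.pair k (f a)) :=
  Primrec₂.natPair.comp (Primrec.const k) hf

theorem pr_pair2 {α : Type} [Primcodable α] (k : ℕ) {f g : α → ℕ} (hf : Primrec f)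
    (hg : Primrec g) : Primrec (fun a => Nat.pair k (Nat.pair (f a) (g a))) :=
  pr_pairc k (Primrec₂.natPair.comp hf hg)

theorem TC_const (t : ATerm) : TC (fun _ => t) := Primrec.const _
theorem TC_add {s t : ℕ → ATerm} (hs : TC s) (ht : TC t) : TC (fun n => .add (s n) (t n)) :=
  pr_pair2 3 hs ht
theorem TC_mul {s t : ℕ → ATerm} (hs : TC s) (ht : TC t) : TC (fun n => .mul (s n) (t n)) :=
  pr_pair2 4 hs ht
theorem TC_app {i : ℕ → ℕ} {t : ℕ → ATerm} (hi : Primrec i) (ht : TC t) :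
    TC (fun n => .app (i n) (t n)) :=
  pr_pair2 5 hi ht

theorem numeral_pr : Primrec (fun n => (numeral n).code) := by
  have : Primrec (fun n : ℕ => Nat.rec (motive := fun _ => ℕ) (Nat.pair 1 0)
      (fun _ c => Nat.pair 3 (Nat.pair c (Nat.pair 2 0))) n) :=
    Primrec.nat_rec₁ _ (Primrec.to₂ (pr_pair2 3 Primrec.snd (Primrec.const _)))
  refine this.of_eq ?_
  intro n
  induction n with
  | zero => rfl
  | succ n ih => simp only [numeral, ATerm.code]; rw [← ih]

theorem TC_num {i : ℕ → ℕ} (hi : Primrec i) : TC (fun n => numeral (i n)) := numeral_pr.comp hi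

/-- Formula templates with two holes and a numerical parameter. -/
def SC (T : ℕ → SOForm → SOForm → SOForm) : Prop :=
  ∃ G : ℕ × ℕ × ℕ → ℕ, Primrec G ∧ ∀ n X Y, (T n X Y).code = G (n, X.code, Y.code)

theorem SC_X : SC (fun _ X _ => X) := ⟨fun e => e.2.1, Primrec.fst.comp Primrec.snd, fun _ _ _ => rfl⟩
theorem SC_Y : SC (fun _ _ Y => Y) := ⟨fun e => e.2.2, Primrec.snd.comp Primrec.snd, fun _ _ _ => rfl⟩
theorem SC_const (φ : SOForm) : SC (fun _ _ _ => φ) := ⟨_, Primrec.const φ.code, fun _ _ _ => rfl⟩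
theorem SC_eq {s t : ℕ → ATerm} (hs : TC s) (ht : TC t) : SC (fun n _ _ => .eq (s n) (t n)) :=
  ⟨_, pr_pair2 0 (hs.comp Primrec.fst) (ht.comp Primrec.fst), fun _ _ _ => rfl⟩
theorem SC_neg {T} (h : SC T) : SC (fun n X Y => .neg (T n X Y)) := by
  obtain ⟨G, hG, e⟩ := h
  exact ⟨_, pr_pairc 2 hG, fun n X Y => by simp only [SOForm.code, e]⟩
theorem SC_disj {T U} (h : SC T) (h' : SC U) : SC (fun n X Y => .disj (T n X Y) (U n X Y)) := by
  obtain ⟨G, hG, e⟩ := h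
  obtain ⟨G', hG', e'⟩ := h'
  exact ⟨_, pr_pair2 3 hG hG', fun n X Y => by simp only [SOForm.code, e, e']⟩
theorem SC_exN {T} (k : ℕ) (h : SC T) : SC (fun n X Y => .exN k (T n X Y)) := by
  obtain ⟨G, hG, e⟩ := h
  exact ⟨_, pr_pair2 4 (Primrec.const k) hG, fun n X Y => by simp only [SOForm.code, e]⟩
theorem SC_allN {T} (k : ℕ) (h : SC T) : SC (fun n X Y => .allN k (T n X Y)) := by
  obtain ⟨G, hG, e⟩ := h
  exact ⟨_, pr_pair2 5 (Primrec.const k) hG, fun n X Y => by simp only [SOForm.code, e]⟩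
theorem SC_exF {T} {i : ℕ → ℕ} (hi : Primrec i) (h : SC T) :
    SC (fun n X Y => .exF (i n) (T n X Y)) := by
  obtain ⟨G, hG, e⟩ := h
  exact ⟨_, pr_pair2 6 (hi.comp Primrec.fst) hG, fun n X Y => by simp only [SOForm.code, e]⟩
theorem SC_allF {T} {i : ℕ → ℕ} (hi : Primrec i) (h : SC T) :
    SC (fun n X Y => .allF (i n) (T n X Y)) := by
  obtain ⟨G, hG, e⟩ := h
  exact ⟨_, pr_pair2 7 (hi.comp Primrec.fst) hG, fun n X Y => by simp only [SOForm.code, e]⟩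
theorem SC_sAnd {T U} (h : SC T) (h' : SC U) : SC (fun n X Y => sAnd (T n X Y) (U n X Y)) :=
  SC_neg (SC_disj (SC_neg h) (SC_neg h'))
theorem SC_sImp {T U} (h : SC T) (h' : SC U) : SC (fun n X Y => sImp (T n X Y) (U n X Y)) :=
  SC_disj (SC_neg h) h'

theorem atC_SC : SC (fun n _ _ => atC n.unpair.1 n.unpair.2) := by
  have h1 : Primrec (fun n : ℕ => n.unpair.1) := Primrec.fst.comp Primrec.unpair
  have h2 : Primrec (fun n : ℕ => 4 + n.unpair.2) :=
    Primrec.nat_add.comp (Primrec.const 4) (Primrec.snd.comp Primrec.unpair)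
  have h3 : TC (fun n => .app (4 + n.unpair.2) (.var 0)) := TC_app h2 (TC_const _)
  have h4 := TC_num h1
  have h5 := TC_add h4 h3
  exact SC_eq (TC_app (Primrec.const 2) (TC_add (TC_mul h5 h5) h4)) (TC_const _)

theorem atTime_SC {T} (k : ℕ) (h : SC T) : SC (fun n X Y => atTime k (T n X Y)) :=
  SC_exN _ (SC_sAnd (SC_const _) h)

theorem nextC_SC : SC (fun _ X _ => nextC X) :=
  SC_exN _ (SC_sAnd (SC_const _) (atTime_SC 1 SC_X))

theorem untlC_SC : SC (fun _ X Y => untlC X Y) :=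
  SC_exN _ (SC_sAnd (SC_const _) (SC_sAnd (atTime_SC 1 SC_Y)
    (SC_allN _ (SC_sImp (SC_const _) (atTime_SC 2 SC_X)))))

theorem exC_SC {T} (h : SC T) : SC (fun n X Y => exC n (T n X Y)) := by
  have h2 : Primrec (fun n : ℕ => 4 + n) := Primrec.nat_add.comp (Primrec.const 4) Primrec.id
  exact SC_exN _ (SC_sAnd (SC_const _) (SC_exF (Primrec.const _) (SC_sAnd (SC_const _)
    (SC_sAnd (SC_const _) (SC_exF h2 (SC_sAnd (SC_allN _ (SC_eq (TC_const _)
      (TC_app h2 (TC_const _)))) h))))))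

theorem closeC_SC (b : SOForm) : SC (fun _ X _ => closeC b X) :=
  SC_exF (Primrec.const _) (SC_exF (Primrec.const _) (SC_exF (Primrec.const _)
    (SC_exN _ (SC_sAnd (SC_const _) (SC_sAnd (SC_const _) (SC_exN _ (SC_sAnd (SC_const _)
      (SC_allF (Primrec.const _) (SC_sImp (SC_const _) SC_X)))))))))

theorem trC_code : ∃ h : ℕ → ℕ, Primrec h ∧ ∀ φ, h φ.code = (trC φ).code := by
  obtain ⟨g0, p0, e0⟩ := atC_SC
  obtain ⟨g1, p1, e1⟩ := SC_neg SC_X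
  obtain ⟨g2, p2, e2⟩ := SC_disj SC_X SC_Y
  obtain ⟨g3, p3, e3⟩ := nextC_SC
  obtain ⟨g4, p4, e4⟩ := untlC_SC
  obtain ⟨g5, p5, e5⟩ := exC_SC SC_X
  obtain ⟨g6, p6, e6⟩ := SC_neg (exC_SC (SC_neg SC_X))
  obtain ⟨h, hp, k0, k1, k2⟩ := codeRec 7 (fun m => g0 (m, 0, 0))
    (p0.comp (Primrec.pair Primrec.id (Primrec.const _)))
    (fun k e => match k with
      | 1 => g1 (0, e.2.1, 0)
      | 2 => g2 (0, e.2.2.1, e.2.2.2)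
      | 3 => g3 (0, e.2.1, 0)
      | 4 => g4 (0, e.2.2.1, e.2.2.2)
      | 5 => g5 (e.1.unpair.1, e.2.2.2, 0)
      | 6 => g6 (e.1.unpair.1, e.2.2.2, 0)
      | _ => 0)
    (by
      intro k
      match k with
      | 0 => exact Primrec.const 0
      | 1 => exact p1.comp (Primrec.pair (Primrec.const _) (Primrec.pair pr_hm (Primrec.const _)))
      | 2 => exact p2.comp (Primrec.pair (Primrec.const _) (Primrec.pair pr_ha pr_hb))
      | 3 => exact p3.comp (Primrec.pair (Primrec.const _) (Primrec.pair pr_hm (Primrec.const _)))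
      | 4 => exact p4.comp (Primrec.pair (Primrec.const _) (Primrec.pair pr_ha pr_hb))
      | 5 => exact p5.comp (Primrec.pair pr_a (Primrec.pair pr_hb (Primrec.const _)))
      | 6 => exact p6.comp (Primrec.pair pr_a (Primrec.pair pr_hb (Primrec.const _)))
      | _ + 7 => exact Primrec.const 0) (by omega)
  -- the unused holes are filled with the formula whose code is `0`
  have c0 : (SOForm.eq (.var 0) (.var 0)).code = 0 := by
    simp [SOForm.code, ATerm.code, show Nat.pair 0 0 = 0 from rfl]
  refine ⟨h, hp, fun φ => ?_⟩
  induction φ with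
  | atom a x =>
    have := e0 (Nat.pair a x) (.eq (.var 0) (.var 0)) (.eq (.var 0) (.var 0))
    rw [c0] at this
    simp only [CTL.code, k0, ← this, trC, Nat.unpair_pair]
  | neg φ ih =>
    have := e1 0 (trC φ) (.eq (.var 0) (.var 0))
    rw [c0] at this
    simp only [CTL.code, trC, this]
    rw [k1 _ _ (by omega) (by omega), ← ih]
    rfl
  | disj φ ψ ih1 ih2 =>
    have := e2 0 (trC φ) (trC ψ)
    simp only [CTL.code, trC, this]
    rw [k1 _ _ (by omega) (by omega), ← ih1, ← ih2]
    simp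
  | next φ ih =>
    have := e3 0 (trC φ) (.eq (.var 0) (.var 0))
    rw [c0] at this
    simp only [CTL.code, trC, this]
    rw [k1 _ _ (by omega) (by omega), ← ih]
    rfl
  | untl φ ψ ih1 ih2 =>
    have := e4 0 (trC φ) (trC ψ)
    simp only [CTL.code, trC, this]
    rw [k1 _ _ (by omega) (by omega), ← ih1, ← ih2]
    simp
  | ex x φ ih =>
    have := e5 x (trC φ) (.eq (.var 0) (.var 0))
    rw [c0] at this
    simp only [CTL.code, trC, this]
    rw [k1 _ _ (by omega) (by omega), ← ih]
    simp
  | all x φ ih =>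
    have := e6 x (trC φ) (.eq (.var 0) (.var 0))
    rw [c0] at this
    simp only [CTL.code, trC, this]
    rw [k1 _ _ (by omega) (by omega), ← ih]
    simp

theorem trC_freeN (φ : CTL ℕ) : ∀ n ∈ (trC φ).freeN, n = 0 := by
  have num : ∀ a, (numeral a).freeN = ∅ := by
    intro a; induction a with
    | zero => rfl
    | succ n ih => simp [numeral, ATerm.freeN, ih]
  induction φ with
  | atom a x => intro n; simp [trC, atC, SOForm.freeN, ATerm.freeN, ppT, num]
  | neg φ ih => exact ih
  | disj φ ψ ih1 ih2 => rintro n (h | h); exacts [ih1 n h, ih2 n h]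
  | next φ ih =>
    intro n; have := ih n
    simp only [trC, nextC, atTime, SOForm.freeN, ATerm.freeN, sAnd, Set.mem_union, Set.mem_sdiff,
      Set.mem_singleton_iff, Set.mem_empty_iff_false]
    grind
  | untl φ ψ ih1 ih2 =>
    intro n; have := ih1 n; have := ih2 n
    simp only [trC, untlC, atTime, SOForm.freeN, ATerm.freeN, sAnd, sImp, geF, Set.mem_union,
      Set.mem_sdiff, Set.mem_singleton_iff, Set.mem_empty_iff_false]
    grind
  | ex x φ ih =>
    intro n; have := ih n
    simp only [trC, exC, pathF, edgeF, ppT, geF, SOForm.freeN, ATerm.freeN, sAnd, sImp,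
      Set.mem_union, Set.mem_sdiff, Set.mem_singleton_iff, Set.mem_empty_iff_false]
    grind
  | all x φ ih =>
    intro n; have := ih n
    simp only [trC, exC, pathF, edgeF, ppT, geF, SOForm.freeN, ATerm.freeN, sAnd, sImp,
      Set.mem_union, Set.mem_sdiff, Set.mem_singleton_iff, Set.mem_empty_iff_false]
    grind

theorem trC_freeF (φ : CTL ℕ) : ∀ n, 4 + n ∈ (trC φ).freeF ↔ n ∈ φ.freeVars := by
  have num : ∀ a, (numeral a).freeF = ∅ := by
    intro a; induction a with
    | zero => rfl
    | succ n ih => simp [numeral, ATerm.freeF, ih]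
  induction φ with
  | atom a x =>
    intro n
    simp only [trC, atC, SOForm.freeF, ATerm.freeF, ppT, num, Set.mem_union, Set.mem_sdiff,
      Set.mem_singleton_iff, Set.mem_empty_iff_false, Set.mem_insert_iff, CTL.freeVars]
    grind
  | neg φ ih => exact ih
  | disj φ ψ ih1 ih2 => intro n; exact or_congr (ih1 n) (ih2 n)
  | next φ ih =>
    intro n
    simp only [trC, nextC, atTime, SOForm.freeF, ATerm.freeF, sAnd, Set.mem_union, Set.mem_sdiff,
      Set.mem_singleton_iff, Set.mem_empty_iff_false, CTL.freeVars, ih]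
    grind
  | untl φ ψ ih1 ih2 =>
    intro n
    simp only [trC, untlC, atTime, SOForm.freeF, ATerm.freeF, sAnd, sImp, geF, Set.mem_union,
      Set.mem_sdiff, Set.mem_singleton_iff, Set.mem_empty_iff_false, CTL.freeVars, ih1, ih2]
    tauto
  | ex x φ ih =>
    intro n
    simp only [trC, exC, pathF, edgeF, ppT, geF, SOForm.freeF, ATerm.freeF, sAnd, sImp,
      Set.mem_union, Set.mem_sdiff, Set.mem_singleton_iff, Set.mem_empty_iff_false,
      Set.mem_insert_iff, CTL.freeVars, ih]
    grind
  | all x φ ih =>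
    intro n
    simp only [trC, exC, pathF, edgeF, ppT, geF, SOForm.freeF, ATerm.freeF, sAnd, sImp,
      Set.mem_union, Set.mem_sdiff, Set.mem_singleton_iff, Set.mem_empty_iff_false,
      Set.mem_insert_iff, CTL.freeVars, ih]
    grind

theorem closeC_sent (b : SOForm) (hb : b.freeN = ∅) (hb' : ∀ n ∈ b.freeF, n = 1 ∨ n = 3) (φ : CTL ℕ) :
    (closeC b (trC φ)).IsSentence ↔ φ.freeVars = ∅ := by
  have h1 : (closeC b (trC φ)).freeN = ∅ := by
    ext n
    have := trC_freeN φ n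
    simp only [closeC, serialF, pathF, edgeF, ppT, geF, SOForm.freeN, ATerm.freeN, sAnd, sImp,
      Set.mem_union, Set.mem_sdiff, Set.mem_singleton_iff, Set.mem_empty_iff_false, hb]
    grind
  have h2 : ∀ n, n ∈ (closeC b (trC φ)).freeF ↔ 4 ≤ n ∧ n ∈ (trC φ).freeF := by
    intro n
    have := hb' n
    simp only [closeC, serialF, pathF, edgeF, ppT, geF, SOForm.freeF, ATerm.freeF, sAnd, sImp,
      Set.mem_union, Set.mem_sdiff, Set.mem_singleton_iff, Set.mem_empty_iff_false,
      Set.mem_insert_iff]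
    grind
  unfold SOForm.IsSentence
  rw [Set.eq_empty_iff_forall_notMem, Set.eq_empty_iff_forall_notMem (s := SOForm.freeF _),
    Set.eq_empty_iff_forall_notMem]
  simp only [h1, h2, ← trC_freeF]
  constructor
  · rintro ⟨-, h⟩ x hx
    exact h _ ⟨by omega, hx⟩
  · intro h
    refine ⟨fun x hx => hx, ?_⟩
    rintro x ⟨h4, hx⟩
    obtain ⟨y, rfl⟩ := Nat.exists_eq_add_of_le h4
    exact h y hx

theorem CTLtoSO (b : SOForm) (Q : Prop) (hb1 : b.freeN = ∅) (hb2 : ∀ n ∈ b.freeF, n = 1 ∨ n = 3)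
    (hb : ∀ v F, b.sat v F ↔ (Q → ∀ x y, F 1 (pp x y) = 0 → y < F 3 x))
    (M : CTL ℕ → Prop) (hM : ∀ φ, M φ ↔ ∃ (E L : ℕ → ℕ → Prop) (vI : ℕ) (hs : ∀ v, ∃ w, E v w),
      (Q → ∃ B : ℕ → ℕ, ∀ x y, E x y → y < B x) ∧ CModels (tsOf E L vI hs) φ) :
    ManyOneRed {n | ∃ φ : CTL ℕ, φ.IsSentence ∧ φ.code = n ∧ M φ} SOTruthCodes := by
  obtain ⟨v, vp, hv⟩ := validCTL
  obtain ⟨g, gp, hg⟩ := guardCTL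
  obtain ⟨h, hp, he⟩ := trC_code
  obtain ⟨G, Gp, hG⟩ := closeC_SC b
  have c0 : (SOForm.eq (.var 0) (.var 0)).code = 0 := by
    simp [SOForm.code, ATerm.code, show Nat.pair 0 0 = 0 from rfl]
  have := mkRed CTL.code SOForm.code SOForm_code_inj (fun φ => φ.IsSentence ∧ M φ)
    (fun φ => φ.IsSentence ∧ SOTrue φ) CTL_code_inj v vp hv g gp
    (by
      intro φ
      rw [hg]
      by_cases h : φ.guarded
      · exact Or.inl h
      · exact Or.inr (fun h' => h h'.1.2))
    (fun φ => closeC b (trC φ)) (fun n => G (0, h n, 0))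
    (Gp.comp (Primrec.pair (Primrec.const _) (Primrec.pair hp (Primrec.const _))))
    (by
      intro φ
      have := hG 0 (trC φ) (.eq (.var 0) (.var 0))
      rw [c0] at this
      simp only [this, he])
    (.eq (.var 0) (.var 0))
    (by
      rintro ⟨⟨h, -⟩, -⟩
      have : (0 : ℕ) ∈ (∅ : Set ℕ) := by rw [← h]; simp [SOForm.freeN, ATerm.freeN]
      exact this)
    (by
      intro φ hφ
      rw [hg] at hφ
      simp only [closeC_sent b hb1 hb2, SOTrue, CTL.IsSentence, hφ, and_true]
      refine and_congr_right ?_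
      intro hf
      rw [closeC_sat φ hf b Q hb, hM])
  convert this using 1
  · ext n; simp only [Set.mem_ofPred_eq]; exact exists_congr fun _ => by tauto
  · ext n; simp only [Set.mem_ofPred_eq, SOTruthCodes]; exact exists_congr fun _ => by tauto

theorem countable_to_SO : ManyOneRed CTLCountableSatCodes SOTruthCodes := by
  refine CTLtoSO ttF False ?_ ?_ ?_ _ countable_iff
  · simp [ttF, SOForm.freeN, ATerm.freeN]
  · simp [ttF, SOForm.freeF, ATerm.freeF]
  · simp [ttF, SOForm.sat]

theorem fin_to_SO : ManyOneRed CTLFinBranchSatCodes SOTruthCodes := by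
  refine CTLtoSO finF True ?_ ?_ ?_ _ fin_iff
  · ext n
    simp only [finF, sImp, edgeF, ppT, SOForm.freeN, ATerm.freeN, Set.mem_union, Set.mem_sdiff,
      Set.mem_singleton_iff, Set.mem_empty_iff_false]
    grind
  · intro n
    simp only [finF, sImp, edgeF, ppT, SOForm.freeF, ATerm.freeF, Set.mem_union, Set.mem_sdiff,
      Set.mem_singleton_iff, Set.mem_empty_iff_false, Set.mem_insert_iff]
    grind
  · intro v F
    simp [finF, SOForm.sat, sImp_sat, edgeF, ATerm.eval, ppT_eval]

end HyperProof

set_option linter.unusedSimpArgs false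

/-! ### Part 5: expressing arithmetic in HyperCTL* -/

namespace HyperProof

def cAnd (φ ψ : CTL ℕ) : CTL ℕ := .neg (.disj (.neg φ) (.neg ψ))
def cImp (φ ψ : CTL ℕ) : CTL ℕ := .disj (.neg φ) ψ
def cF (φ : CTL ℕ) : CTL ℕ := .untl (.disj φ (.neg φ)) φ
def XF (φ : CTL ℕ) : CTL ℕ := .next (cF φ)
def meet (a v b w : ℕ) : CTL ℕ := XF (cAnd (.atom a v) (.atom b w))
def before (a v b w : ℕ) : CTL ℕ := XF (cAnd (.atom a v) (XF (.atom b w)))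
def SUCC (v w : ℕ) : CTL ℕ := XF (cAnd (.atom 0 v) (.next (.atom 0 w)))
def ZERO (v : ℕ) : CTL ℕ := .next (.atom 0 v)
def ONE (v : ℕ) : CTL ℕ := .next (.next (.atom 0 v))
def Sing (v : ℕ) : CTL ℕ := cAnd (XF (.atom 0 v)) (.neg (before 0 v 0 v))
def exNum (v : ℕ) (φ : CTL ℕ) : CTL ℕ := .ex v (cAnd (Sing v) φ)
def allNum (v : ℕ) (φ : CTL ℕ) : CTL ℕ := .all v (cImp (Sing v) φ)
def Rel (g x y : ℕ) : CTL ℕ :=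
  .ex 10 (cAnd (meet 1 10 0 x) (cAnd (meet 2 10 0 y) (meet 3 10 0 g)))

variable {S : TS ℕ}

/-- Label `k` occurs at position `n + 1`. -/
def T (S : TS ℕ) (k : ℕ) (ρ : ℕ → S.V) (n : ℕ) : Prop := k ∈ S.lab (ρ (n + 1))
/-- Initial paths. -/
def GP (S : TS ℕ) (ρ : ℕ → S.V) : Prop := S.IsPath ρ ∧ ρ 0 = S.vI
def GA (S : TS ℕ) (As : ℕ → ℕ → S.V) : Prop := ∀ x, GP S (As x)
def Num (S : TS ℕ) (ρ : ℕ → S.V) (n : ℕ) : Prop := ∀ m, T S 0 ρ m ↔ m = n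
def RelS (S : TS ℕ) (ρ : ℕ → S.V) (n m : ℕ) : Prop :=
  ∃ σ, GP S σ ∧ T S 1 σ n ∧ T S 2 σ m ∧ ∃ k, T S 3 σ k ∧ T S 0 ρ k
/-- All sets and all binary relations are represented by initial paths. -/
def Nice (S : TS ℕ) : Prop :=
  (∀ X : Set ℕ, ∃ ρ, GP S ρ ∧ ∀ n, T S 0 ρ n ↔ n ∈ X) ∧
  (∀ R : ℕ → ℕ → Prop, ∃ ρ, GP S ρ ∧ ∀ n m, RelS S ρ n m ↔ R n m)

theorem cAnd_sat (φ ψ : CTL ℕ) (As r) :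
    (cAnd φ ψ).sat S As r ↔ φ.sat S As r ∧ ψ.sat S As r := by
  simp [cAnd, CTL.sat]

theorem cImp_sat (φ ψ : CTL ℕ) (As r) :
    (cImp φ ψ).sat S As r ↔ (φ.sat S As r → ψ.sat S As r) := by
  simp only [cImp, CTL.sat]; tauto

theorem cF_sat (φ : CTL ℕ) (As r) :
    (cF φ).sat S As r ↔ ∃ n, φ.sat S (fun x i => As x (i + n)) r := by
  simp only [cF, CTL.sat]
  exact exists_congr fun n => ⟨fun h => h.1, fun h => ⟨h, fun _ _ => em _⟩⟩

theorem XF_sat (φ : CTL ℕ) (As r) :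
    (XF φ).sat S As r ↔ ∃ n, φ.sat S (fun x i => As x (i + n + 1)) r := by
  simp only [XF, CTL.sat, cF_sat]

theorem meet_sat (a v b w : ℕ) (As r) :
    (meet a v b w).sat S As r ↔ ∃ n, T S a (As v) n ∧ T S b (As w) n := by
  simp only [meet, XF_sat, cAnd_sat, CTL.sat, T, Nat.zero_add]

theorem before_sat (a v b w : ℕ) (As r) :
    (before a v b w).sat S As r ↔ ∃ n m, n < m ∧ T S a (As v) n ∧ T S b (As w) m := by
  simp only [before, XF_sat, cAnd_sat, CTL.sat, T, Nat.zero_add]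
  constructor
  · rintro ⟨n, h, d, h'⟩
    refine ⟨n, d + 1 + n, by omega, h, ?_⟩
    exact h'
  · rintro ⟨n, m, hl, h, h'⟩
    refine ⟨n, h, m - n - 1, ?_⟩
    rwa [show m - n - 1 + 1 + n + 1 = m + 1 by omega]

theorem SUCC_sat (v w : ℕ) (As r) :
    (SUCC v w).sat S As r ↔ ∃ n, T S 0 (As v) n ∧ T S 0 (As w) (n + 1) := by
  simp only [SUCC, XF_sat, cAnd_sat, CTL.sat, T, Nat.zero_add]
  refine exists_congr fun n => and_congr_right fun _ => ?_
  rw [show 1 + n + 1 = n + 1 + 1 by omega]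

theorem ZERO_sat (v : ℕ) (As r) : (ZERO v).sat S As r ↔ T S 0 (As v) 0 := by
  simp only [ZERO, CTL.sat, T]

theorem ONE_sat (v : ℕ) (As r) : (ONE v).sat S As r ↔ T S 0 (As v) 1 := by
  simp only [ONE, CTL.sat, T]

theorem Sing_sat (v : ℕ) (As r) : (Sing v).sat S As r ↔ ∃ n, Num S (As v) n := by
  simp only [Sing, cAnd_sat, CTL.sat, XF_sat, before_sat, Nat.zero_add]
  constructor
  · rintro ⟨⟨n, hn⟩, h⟩
    refine ⟨n, fun m => ⟨fun hm => ?_, fun e => e ▸ hn⟩⟩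
    by_contra hne
    apply h
    rcases lt_or_gt_of_ne hne with hl | hl
    · exact ⟨m, n, hl, hm, hn⟩
    · exact ⟨n, m, hl, hn, hm⟩
  · rintro ⟨n, hn⟩
    refine ⟨⟨n, (hn n).2 rfl⟩, ?_⟩
    rintro ⟨a, b, hl, ha, hb⟩
    rw [hn] at ha hb
    omega

theorem GA.upd {As : ℕ → ℕ → S.V} (h : GA S As) {ρ} (hρ : GP S ρ) (x : ℕ) :
    GA S (Function.update As x ρ) := by
  intro y
  by_cases e : y = x
  · subst e; simpa using hρ
  · rw [Function.update_of_ne e]; exact h y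

theorem ex_sat {As : ℕ → ℕ → S.V} (h : GA S As) (x : ℕ) (φ : CTL ℕ) (r) :
    (CTL.ex x φ).sat S As r ↔ ∃ ρ, GP S ρ ∧ φ.sat S (Function.update As x ρ) x := by
  simp only [CTL.sat, (h r).2, GP, and_assoc]

theorem all_sat {As : ℕ → ℕ → S.V} (h : GA S As) (x : ℕ) (φ : CTL ℕ) (r) :
    (CTL.all x φ).sat S As r ↔ ∀ ρ, GP S ρ → φ.sat S (Function.update As x ρ) x := by
  simp only [CTL.sat, (h r).2, GP, and_imp]

theorem Nice.num (hN : Nice S) (n : ℕ) : ∃ ρ, GP S ρ ∧ Num S ρ n := hN.1 {n}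

theorem exNum_iff (hN : Nice S) {As : ℕ → ℕ → S.V} (h : GA S As) (x : ℕ) (φ : CTL ℕ) (r)
    (P : ℕ → Prop)
    (H : ∀ n ρ, GP S ρ → Num S ρ n → (φ.sat S (Function.update As x ρ) x ↔ P n)) :
    (exNum x φ).sat S As r ↔ ∃ n, P n := by
  simp only [exNum, ex_sat h, cAnd_sat, Sing_sat, Function.update_self]
  constructor
  · rintro ⟨ρ, hρ, ⟨n, hn⟩, h'⟩
    exact ⟨n, (H n ρ hρ hn).1 h'⟩
  · rintro ⟨n, hn⟩
    obtain ⟨ρ, hρ, h'⟩ := hN.num n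
    exact ⟨ρ, hρ, ⟨n, h'⟩, (H n ρ hρ h').2 hn⟩

theorem allNum_sat {As : ℕ → ℕ → S.V} (h : GA S As) (x : ℕ) (φ : CTL ℕ) (r) :
    (allNum x φ).sat S As r ↔
      ∀ n ρ, GP S ρ → Num S ρ n → φ.sat S (Function.update As x ρ) x := by
  simp only [allNum, all_sat h, cImp_sat, Sing_sat, Function.update_self]
  exact ⟨fun h n ρ hρ hn => h ρ hρ ⟨n, hn⟩, fun h ρ hρ ⟨n, hn⟩ => h n ρ hρ hn⟩

theorem allNum_iff (hN : Nice S) {As : ℕ → ℕ → S.V} (h : GA S As) (x : ℕ) (φ : CTL ℕ) (r)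
    (P : ℕ → Prop)
    (H : ∀ n ρ, GP S ρ → Num S ρ n → (φ.sat S (Function.update As x ρ) x ↔ P n)) :
    (allNum x φ).sat S As r ↔ ∀ n, P n := by
  rw [allNum_sat h]
  constructor
  · intro h' n
    obtain ⟨ρ, hρ, hn⟩ := hN.num n
    exact (H n ρ hρ hn).1 (h' n ρ hρ hn)
  · intro h' n ρ hρ hn
    exact (H n ρ hρ hn).2 (h' n)

theorem meet_num {As : ℕ → ℕ → S.V} {v w n m : ℕ} (hv : Num S (As v) n) (hw : Num S (As w) m) (r) :
    (meet 0 v 0 w).sat S As r ↔ n = m := by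
  rw [meet_sat]
  constructor
  · rintro ⟨k, h1, h2⟩; rw [hv] at h1; rw [hw] at h2; omega
  · rintro rfl; exact ⟨n, (hv n).2 rfl, (hw n).2 rfl⟩

theorem before_num {As : ℕ → ℕ → S.V} {v w n m : ℕ} (hv : Num S (As v) n) (hw : Num S (As w) m) (r) :
    (before 0 v 0 w).sat S As r ↔ n < m := by
  rw [before_sat]
  constructor
  · rintro ⟨k, l, h, h1, h2⟩; rw [hv] at h1; rw [hw] at h2; omega
  · intro h; exact ⟨n, m, h, (hv n).2 rfl, (hw m).2 rfl⟩

theorem SUCC_num {As : ℕ → ℕ → S.V} {v w n m : ℕ} (hv : Num S (As v) n) (hw : Num S (As w) m) (r) :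
    (SUCC v w).sat S As r ↔ m = n + 1 := by
  rw [SUCC_sat]
  constructor
  · rintro ⟨k, h1, h2⟩; rw [hv] at h1; rw [hw] at h2; omega
  · rintro rfl; exact ⟨n, (hv n).2 rfl, (hw _).2 rfl⟩

theorem ZERO_num {As : ℕ → ℕ → S.V} {v n : ℕ} (hv : Num S (As v) n) (r) :
    (ZERO v).sat S As r ↔ n = 0 := by
  rw [ZERO_sat, hv]; exact eq_comm

theorem ONE_num {As : ℕ → ℕ → S.V} {v n : ℕ} (hv : Num S (As v) n) (r) :
    (ONE v).sat S As r ↔ n = 1 := by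
  rw [ONE_sat, hv]; exact eq_comm

theorem Rel_num {As : ℕ → ℕ → S.V} (h : GA S As) {g x y n m : ℕ} (hx : Num S (As x) n)
    (hy : Num S (As y) m) (h1 : g ≠ 10) (h2 : x ≠ 10) (h3 : y ≠ 10) (r) :
    (Rel g x y).sat S As r ↔ RelS S (As g) n m := by
  simp only [Rel, ex_sat h, cAnd_sat, meet_sat, Function.update_self, Function.update_of_ne h1,
    Function.update_of_ne h2, Function.update_of_ne h3, RelS]
  refine exists_congr fun ρ => and_congr_right fun _ => ?_
  refine and_congr ?_ (and_congr ?_ Iff.rfl)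
  · constructor
    · rintro ⟨k, h, h'⟩; rw [hx] at h'; exact h' ▸ h
    · intro h; exact ⟨n, h, (hx n).2 rfl⟩
  · constructor
    · rintro ⟨k, h, h'⟩; rw [hy] at h'; exact h' ▸ h
    · intro h; exact ⟨m, h, (hy m).2 rfl⟩

/-! Addition and multiplication -/

def stepA : CTL ℕ := allNum 4 (allNum 5 (allNum 6 (allNum 7
  (cImp (cAnd (Rel 3 4 5) (cAnd (SUCC 4 6) (SUCC 5 7))) (Rel 3 6 7)))))
def ADD (a b c : ℕ) : CTL ℕ :=
  .all 3 (cImp (cAnd (allNum 4 (cImp (ZERO 4) (Rel 3 4 a))) stepA) (Rel 3 b c))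

def stepM (a : ℕ) : CTL ℕ := allNum 12 (allNum 13 (allNum 14 (allNum 15
  (cImp (cAnd (Rel 11 12 13) (cAnd (SUCC 12 14) (ADD 13 a 15))) (Rel 11 14 15)))))
def MUL (a b c : ℕ) : CTL ℕ :=
  .all 11 (cImp (cAnd (allNum 12 (cImp (ZERO 12) (Rel 11 12 12))) (stepM a)) (Rel 11 b c))

theorem stepA_sat (hN : Nice S) {As : ℕ → ℕ → S.V} (h : GA S As) (r) :
    stepA.sat S As r ↔ ∀ n m n' m', RelS S (As 3) n m ∧ n' = n + 1 ∧ m' = m + 1 →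
      RelS S (As 3) n' m' := by
  refine allNum_iff hN h _ _ _ _ fun n ρ hρ hn => ?_
  refine allNum_iff hN (h.upd hρ _) _ _ _ _ fun m ρ2 hρ2 hm => ?_
  refine allNum_iff hN ((h.upd hρ _).upd hρ2 _) _ _ _ _ fun n' ρ3 hρ3 hn' => ?_
  refine allNum_iff hN (((h.upd hρ _).upd hρ2 _).upd hρ3 _) _ _ _ _ fun m' ρ4 hρ4 hm' => ?_
  have hG := (((h.upd hρ 4).upd hρ2 5).upd hρ3 6).upd hρ4 7
  rw [cImp_sat, cAnd_sat, cAnd_sat, Rel_num hG (n := n) (m := m), Rel_num hG (n := n') (m := m'),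
    SUCC_num (n := n) (m := n'), SUCC_num (n := m) (m := m')]
  · simp
  all_goals first | omega | simpa

theorem ADD_sat (hN : Nice S) {As : ℕ → ℕ → S.V} (h : GA S As) {a b c x y z : ℕ}
    (ha : Num S (As a) x) (hb : Num S (As b) y) (hc : Num S (As c) z)
    (ha' : a ≠ 3 ∧ a ≠ 4 ∧ a ≠ 10) (hb' : b ≠ 3 ∧ b ≠ 10) (hc' : c ≠ 3 ∧ c ≠ 10) (r) :
    (ADD a b c).sat S As r ↔ x + y = z := by
  have key : ∀ ρ, GP S ρ → ((cImp (cAnd (allNum 4 (cImp (ZERO 4) (Rel 3 4 a))) stepA)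
      (Rel 3 b c)).sat S (Function.update As 3 ρ) 3 ↔
      ((∀ n, n = 0 → RelS S ρ n x) → (∀ n m n' m', RelS S ρ n m ∧ n' = n + 1 ∧ m' = m + 1 →
      RelS S ρ n' m') → RelS S ρ y z)) := by
    intro ρ hρ
    have hG := h.upd hρ 3
    rw [cImp_sat, cAnd_sat, stepA_sat hN hG, Rel_num hG (n := y) (m := z),
      allNum_iff hN hG _ _ _ (fun n => n = 0 → RelS S ρ n x)]
    · simp
    · intro n σ hσ hn
      rw [cImp_sat, ZERO_num (n := n), Rel_num (hG.upd hσ 4) (n := n) (m := x)]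
      · simp
      all_goals first | omega | skip
      · simpa
      · rw [Function.update_of_ne ha'.2.1, Function.update_of_ne ha'.1]; exact ha
      · simpa
    all_goals first | omega | skip
    · rw [Function.update_of_ne hb'.1]; exact hb
    · rw [Function.update_of_ne hc'.1]; exact hc
  rw [ADD, all_sat h]
  constructor
  · intro H
    obtain ⟨ρ, hρ, e⟩ := hN.2 (fun n m => x + n = m)
    have := (key ρ hρ).1 (H ρ hρ)
    simp only [e] at this
    apply this
    · omega
    · omega
  · rintro rfl ρ hρ
    rw [key ρ hρ]
    intro h0 hs
    clear hb hc key
    induction y with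
    | zero => exact h0 0 rfl
    | succ y ih => exact hs y (x + y) _ _ ⟨ih, rfl, rfl⟩

theorem stepM_sat (hN : Nice S) {As : ℕ → ℕ → S.V} (h : GA S As) {a x : ℕ}
    (ha : Num S (As a) x) (ha' : a < 3) (r) :
    (stepM a).sat S As r ↔ ∀ n m n' m', RelS S (As 11) n m ∧ n' = n + 1 ∧ m + x = m' →
      RelS S (As 11) n' m' := by
  refine allNum_iff hN h _ _ _ _ fun n ρ hρ hn => ?_
  refine allNum_iff hN (h.upd hρ _) _ _ _ _ fun m ρ2 hρ2 hm => ?_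
  refine allNum_iff hN ((h.upd hρ _).upd hρ2 _) _ _ _ _ fun n' ρ3 hρ3 hn' => ?_
  refine allNum_iff hN (((h.upd hρ _).upd hρ2 _).upd hρ3 _) _ _ _ _ fun m' ρ4 hρ4 hm' => ?_
  have hG := (((h.upd hρ 12).upd hρ2 13).upd hρ3 14).upd hρ4 15
  rw [cImp_sat, cAnd_sat, cAnd_sat, Rel_num hG (n := n) (m := m), Rel_num hG (n := n') (m := m'),
    SUCC_num (n := n) (m := n'), ADD_sat hN hG (x := m) (y := x) (z := m')]
  · simp
  all_goals first | omega | skip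
  · simpa
  · rw [Function.update_of_ne (by omega), Function.update_of_ne (by omega),
      Function.update_of_ne (by omega), Function.update_of_ne (by omega)]
    exact ha
  all_goals simpa

theorem MUL_sat (hN : Nice S) {As : ℕ → ℕ → S.V} (h : GA S As) {a b c x y z : ℕ}
    (ha : Num S (As a) x) (hb : Num S (As b) y) (hc : Num S (As c) z)
    (ha' : a < 3) (hb' : b < 3) (hc' : c < 3) (r) :
    (MUL a b c).sat S As r ↔ x * y = z := by
  have key : ∀ ρ, GP S ρ → ((cImp (cAnd (allNum 12 (cImp (ZERO 12) (Rel 11 12 12))) (stepM a))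
      (Rel 11 b c)).sat S (Function.update As 11 ρ) 11 ↔
      ((∀ n, n = 0 → RelS S ρ n n) → (∀ n m n' m', RelS S ρ n m ∧ n' = n + 1 ∧ m + x = m' →
      RelS S ρ n' m') → RelS S ρ y z)) := by
    intro ρ hρ
    have hG := h.upd hρ 11
    rw [cImp_sat, cAnd_sat, stepM_sat hN hG (x := x), Rel_num hG (n := y) (m := z),
      allNum_iff hN hG _ _ _ (fun n => n = 0 → RelS S ρ n n)]
    · simp
    · intro n σ hσ hn
      rw [cImp_sat, ZERO_num (n := n), Rel_num (hG.upd hσ 12) (n := n) (m := n)]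
      · simp
      all_goals first | omega | simpa
    all_goals first | omega | skip
    · rw [Function.update_of_ne (by omega)]; exact hb
    · rw [Function.update_of_ne (by omega)]; exact hc
    · rw [Function.update_of_ne (by omega)]; exact ha
  rw [MUL, all_sat h]
  constructor
  · intro H
    obtain ⟨ρ, hρ, e⟩ := hN.2 (fun n m => x * n = m)
    have := (key ρ hρ).1 (H ρ hρ)
    simp only [e] at this
    apply this
    · rintro n rfl; simp
    · rintro n m n' m' ⟨rfl, rfl, rfl⟩; ring
  · rintro rfl ρ hρ
    rw [key ρ hρ]
    intro h0 hs
    clear hb hc key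
    induction y with
    | zero => exact h0 0 rfl
    | succ y ih => exact hs y (x * y) _ _ ⟨ih, rfl, by ring⟩

/-! Functions -/

def FUNC (g : ℕ) : CTL ℕ :=
  cAnd (allNum 4 (exNum 5 (Rel g 4 5)))
    (allNum 4 (allNum 5 (allNum 6 (cImp (cAnd (Rel g 4 5) (Rel g 4 6)) (meet 0 5 0 6)))))

def IsF (S : TS ℕ) (ρ : ℕ → S.V) (h : ℕ → ℕ) : Prop := ∀ n m, RelS S ρ n m ↔ m = h n

theorem FUNC_sat (hN : Nice S) {As : ℕ → ℕ → S.V} (h : GA S As) {g : ℕ} (hg : 20 ≤ g) (r) :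
    (FUNC g).sat S As r ↔ ∃ f, IsF S (As g) f := by
  have h1 : ∀ r, (allNum 4 (exNum 5 (Rel g 4 5))).sat S As r ↔ ∀ n, ∃ m, RelS S (As g) n m := by
    intro r
    refine allNum_iff hN h _ _ _ _ fun n ρ hρ hn => ?_
    refine exNum_iff hN (h.upd hρ _) _ _ _ _ fun m ρ2 hρ2 hm => ?_
    rw [Rel_num ((h.upd hρ 4).upd hρ2 5) (n := n) (m := m)]
    · rw [Function.update_of_ne (by omega), Function.update_of_ne (by omega)]
    all_goals first | omega | simpa
  have h2 : ∀ r, (allNum 4 (allNum 5 (allNum 6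
      (cImp (cAnd (Rel g 4 5) (Rel g 4 6)) (meet 0 5 0 6))))).sat S As r ↔
      ∀ n m m', RelS S (As g) n m ∧ RelS S (As g) n m' → m = m' := by
    intro r
    refine allNum_iff hN h _ _ _ _ fun n ρ hρ hn => ?_
    refine allNum_iff hN (h.upd hρ _) _ _ _ _ fun m ρ2 hρ2 hm => ?_
    refine allNum_iff hN ((h.upd hρ _).upd hρ2 _) _ _ _ _ fun m' ρ3 hρ3 hm' => ?_
    have hG := ((h.upd hρ 4).upd hρ2 5).upd hρ3 6
    rw [cImp_sat, cAnd_sat, Rel_num hG (n := n) (m := m), Rel_num hG (n := n) (m := m'),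
      meet_num (n := m) (m := m')]
    · rw [Function.update_of_ne (by omega), Function.update_of_ne (by omega),
        Function.update_of_ne (by omega)]
    all_goals first | omega | simpa
  rw [FUNC, cAnd_sat, h1, h2]
  constructor
  · rintro ⟨h3, h4⟩
    choose f hf using h3
    exact ⟨f, fun n m => ⟨fun h => h4 n _ _ ⟨h, hf n⟩, fun h => h ▸ hf n⟩⟩
  · rintro ⟨f, hf⟩
    refine ⟨fun n => ⟨f n, (hf n _).2 rfl⟩, ?_⟩
    rintro n m m' ⟨a, b⟩
    rw [hf] at a b
    omega

theorem Nice.func (hN : Nice S) (f : ℕ → ℕ) : ∃ ρ, GP S ρ ∧ IsF S ρ f :=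
  hN.2 (fun n m => m = f n)

/-! The translation -/

def numV (x : ℕ) : ℕ := 2 * x + 20
def fnV (x : ℕ) : ℕ := 2 * x + 21

/-- The term described by `X` (with result variable `0`) has the value `v`. -/
def evT (v : ℕ) (X : CTL ℕ) : CTL ℕ := exNum 0 (cAnd (meet 0 0 0 v) X)

def addT (X Y : CTL ℕ) : CTL ℕ := exNum 1 (exNum 2 (cAnd (evT 1 X) (cAnd (evT 2 Y) (ADD 1 2 0))))
def mulT (X Y : CTL ℕ) : CTL ℕ := exNum 1 (exNum 2 (cAnd (evT 1 X) (cAnd (evT 2 Y) (MUL 1 2 0))))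
def appT (f : ℕ) (X : CTL ℕ) : CTL ℕ := exNum 1 (cAnd (evT 1 X) (Rel (fnV f) 1 0))
def ltT (X Y : CTL ℕ) : CTL ℕ :=
  exNum 1 (exNum 2 (cAnd (evT 1 X) (cAnd (evT 2 Y) (before 0 1 0 2))))
def eqT (X Y : CTL ℕ) : CTL ℕ := exNum 0 (cAnd X Y)
def exFT (f : ℕ) (X : CTL ℕ) : CTL ℕ := .ex (fnV f) (cAnd (FUNC (fnV f)) X)
def allFT (f : ℕ) (X : CTL ℕ) : CTL ℕ := .all (fnV f) (cImp (FUNC (fnV f)) X)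

def trT : ATerm → CTL ℕ
  | .var x => meet 0 0 0 (numV x)
  | .zero => ZERO 0
  | .one => ONE 0
  | .add s t => addT (trT s) (trT t)
  | .mul s t => mulT (trT s) (trT t)
  | .app f t => appT f (trT t)

def trS : SOForm → CTL ℕ
  | .eq s t => eqT (trT s) (trT t)
  | .lt s t => ltT (trT s) (trT t)
  | .neg φ => .neg (trS φ)
  | .disj φ ψ => .disj (trS φ) (trS ψ)
  | .exN x φ => exNum (numV x) (trS φ)
  | .allN x φ => allNum (numV x) (trS φ)
  | .exF f φ => exFT f (trS φ)
  | .allF f φ => allFT f (trS φ)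

/-- Semantic correctness of a term translation. -/
def TOK (S : TS ℕ) (t : ATerm) (v : ℕ → ℕ) (F : ℕ → ℕ → ℕ) (As : ℕ → ℕ → S.V) : Prop :=
  ∀ (As' : ℕ → ℕ → S.V), GA S As' → (∀ x, 20 ≤ x → As' x = As x) →
    ∀ r k, Num S (As' 0) k → ((trT t).sat S As' r ↔ t.eval v F = k)

theorem evT_sat (hN : Nice S) {t v F} {As As' : ℕ → ℕ → S.V} (ht : TOK S t v F As)
    (h : GA S As') (e : ∀ x, 20 ≤ x → As' x = As x) {w k : ℕ} (hw : Num S (As' w) k) (h0 : w ≠ 0)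
    (r) : (evT w (trT t)).sat S As' r ↔ t.eval v F = k := by
  rw [evT, exNum_iff hN h _ _ _ (fun n => n = k ∧ t.eval v F = n)]
  · simp
  · intro n ρ hρ hn
    rw [cAnd_sat, meet_num (n := n) (m := k), ht _ (h.upd hρ 0) _ _ n]
    · simpa
    · intro x hx
      rw [Function.update_of_ne (by omega)]; exact e x hx
    · simpa
    · rw [Function.update_of_ne h0]; exact hw

theorem bin_sat (hN : Nice S) {s t v F} {As As' : ℕ → ℕ → S.V} (hs : TOK S s v F As)
    (ht : TOK S t v F As) (h : GA S As') (e : ∀ x, 20 ≤ x → As' x = As x) (B : CTL ℕ)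
    (P : ℕ → ℕ → Prop) (HB : ∀ n m ρ σ, GP S ρ → GP S σ → Num S ρ n → Num S σ m →
      (B.sat S (Function.update (Function.update As' 1 ρ) 2 σ) 2 ↔ P n m)) (r) :
    (exNum 1 (exNum 2 (cAnd (evT 1 (trT s)) (cAnd (evT 2 (trT t)) B)))).sat S As' r ↔
      P (s.eval v F) (t.eval v F) := by
  rw [exNum_iff hN h _ _ _ (fun n => ∃ m, s.eval v F = n ∧ t.eval v F = m ∧ P n m)]
  · simp
  intro n ρ hρ hn
  refine exNum_iff hN (h.upd hρ _) _ _ _ _ fun m σ hσ hm => ?_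
  have hG := (h.upd hρ 1).upd hσ 2
  have e' : ∀ x, 20 ≤ x → Function.update (Function.update As' 1 ρ) 2 σ x = As x := by
    intro x hx
    rw [Function.update_of_ne (by omega), Function.update_of_ne (by omega)]; exact e x hx
  rw [cAnd_sat, cAnd_sat, HB n m ρ σ hρ hσ hn hm, evT_sat hN hs hG e' (k := n) _ (by omega),
    evT_sat hN ht hG e' (k := m) _ (by omega)]
  · simpa
  · simpa

theorem trT_sat (hN : Nice S) (t : ATerm) (v F) (As : ℕ → ℕ → S.V)
    (hn : ∀ x ∈ t.freeN, Num S (As (numV x)) (v x))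
    (hf : ∀ x ∈ t.freeF, IsF S (As (fnV x)) (F x)) : TOK S t v F As := by
  induction t with
  | var x =>
    intro As' h e r k hk
    rw [trT, meet_num (n := k) (m := v x) hk]
    · exact eq_comm
    · rw [e _ (by unfold numV; omega)]
      exact hn x (by simp [ATerm.freeN])
  | zero => intro As' h e r k hk; rw [trT, ZERO_num hk]; exact eq_comm
  | one => intro As' h e r k hk; rw [trT, ONE_num hk]; exact eq_comm
  | add s t ih1 ih2 =>
    intro As' h e r k hk
    refine bin_sat hN (ih1 (fun x hx => hn x (Or.inl hx)) (fun x hx => hf x (Or.inl hx)))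
      (ih2 (fun x hx => hn x (Or.inr hx)) (fun x hx => hf x (Or.inr hx))) h e _
      (fun n m => n + m = k) ?_ r
    intro n m ρ σ hρ hσ h1 h2
    rw [ADD_sat hN ((h.upd hρ 1).upd hσ 2) (x := n) (y := m) (z := k)]
    all_goals first | omega | simpa
  | mul s t ih1 ih2 =>
    intro As' h e r k hk
    refine bin_sat hN (ih1 (fun x hx => hn x (Or.inl hx)) (fun x hx => hf x (Or.inl hx)))
      (ih2 (fun x hx => hn x (Or.inr hx)) (fun x hx => hf x (Or.inr hx))) h e _
      (fun n m => n * m = k) ?_ r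
    intro n m ρ σ hρ hσ h1 h2
    rw [MUL_sat hN ((h.upd hρ 1).upd hσ 2) (x := n) (y := m) (z := k)]
    all_goals first | omega | simpa
  | app f t ih =>
    intro As' h e r k hk
    have ht := ih hn (fun x hx => hf x (Or.inr hx))
    rw [trT, appT, exNum_iff hN h _ _ _ (fun n => t.eval v F = n ∧ k = F f n)]
    · simp [ATerm.eval, eq_comm]
    intro n ρ hρ hn
    have hfv : 20 ≤ fnV f := by unfold fnV; omega
    rw [cAnd_sat, evT_sat hN ht (h.upd hρ 1) (k := n) _ _ (by omega),
      Rel_num (h.upd hρ 1) (n := n) (m := k)]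
    · rw [Function.update_of_ne (by omega), e _ hfv, hf f (Or.inl rfl)]
    all_goals first | omega | skip
    · simpa
    · simpa
    · intro x hx
      rw [Function.update_of_ne (by omega)]; exact e x hx
    · simpa

theorem trS_sat (hN : Nice S) (φ : SOForm) : ∀ (v F) (As : ℕ → ℕ → S.V), GA S As →
    (∀ x ∈ φ.freeN, Num S (As (numV x)) (v x)) →
    (∀ x ∈ φ.freeF, IsF S (As (fnV x)) (F x)) → ∀ r, ((trS φ).sat S As r ↔ φ.sat v F) := by
  have hnn : ∀ x y, numV x = numV y ↔ x = y := by intro x y; unfold numV; omega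
  have hff : ∀ x y, fnV x = fnV y ↔ x = y := by intro x y; unfold fnV; omega
  have hnf : ∀ x y, numV x ≠ fnV y := by intro x y; unfold fnV numV; omega
  have updN : ∀ (φ : SOForm) x (v : ℕ → ℕ) (As : ℕ → ℕ → S.V) n ρ,
      (∀ y ∈ φ.freeN \ {x}, Num S (As (numV y)) (v y)) → Num S ρ n →
      ∀ y ∈ φ.freeN, Num S (Function.update As (numV x) ρ (numV y)) (Function.update v x n y) := by
    intro φ x v As n ρ h1 h2 y hy
    by_cases e : y = x
    · subst e; simpa
    · rw [Function.update_of_ne (by rw [Ne, hnn]; exact e), Function.update_of_ne e]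
      exact h1 y ⟨hy, e⟩
  have updF : ∀ (φ : SOForm) x (F : ℕ → ℕ → ℕ) (As : ℕ → ℕ → S.V) f ρ,
      (∀ y ∈ φ.freeF \ {x}, IsF S (As (fnV y)) (F y)) → IsF S ρ f →
      ∀ y ∈ φ.freeF, IsF S (Function.update As (fnV x) ρ (fnV y)) (Function.update F x f y) := by
    intro φ x v As n ρ h1 h2 y hy
    by_cases e : y = x
    · subst e; simpa
    · rw [Function.update_of_ne (by rw [Ne, hff]; exact e), Function.update_of_ne e]
      exact h1 y ⟨hy, e⟩
  have nF : ∀ x (As : ℕ → ℕ → S.V) ρ y, Function.update As (numV x) ρ (fnV y) = As (fnV y) :=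
    fun x As ρ y => Function.update_of_ne (hnf x y).symm _ _
  have Fn : ∀ x (As : ℕ → ℕ → S.V) ρ y, Function.update As (fnV x) ρ (numV y) = As (numV y) :=
    fun x As ρ y => Function.update_of_ne (hnf y x) _ _
  induction φ with
  | eq s t =>
    intro v F As h hn hf r
    have hs := trT_sat hN s v F As (fun x hx => hn x (Or.inl hx)) (fun x hx => hf x (Or.inl hx))
    have ht := trT_sat hN t v F As (fun x hx => hn x (Or.inr hx)) (fun x hx => hf x (Or.inr hx))
    rw [trS, eqT, exNum_iff hN h _ _ _ (fun n => s.eval v F = n ∧ t.eval v F = n)]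
    · simp [SOForm.sat, eq_comm]
    intro n ρ hρ hn
    have e : ∀ x, 20 ≤ x → Function.update As 0 ρ x = As x :=
      fun x hx => Function.update_of_ne (by omega) _ _
    rw [cAnd_sat, hs _ (h.upd hρ 0) e _ n (by simpa), ht _ (h.upd hρ 0) e _ n (by simpa)]
  | lt s t =>
    intro v F As h hn hf r
    have hs := trT_sat hN s v F As (fun x hx => hn x (Or.inl hx)) (fun x hx => hf x (Or.inl hx))
    have ht := trT_sat hN t v F As (fun x hx => hn x (Or.inr hx)) (fun x hx => hf x (Or.inr hx))
    refine bin_sat hN hs ht h (fun _ _ => rfl) _ (fun n m => n < m) ?_ r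
    intro n m ρ σ hρ hσ h1 h2
    rw [before_num (n := n) (m := m)]
    all_goals simpa
  | neg φ ih => intro v F As h hn hf r; exact not_congr (ih v F As h hn hf r)
  | disj φ ψ ih1 ih2 =>
    intro v F As h hn hf r
    exact or_congr (ih1 v F As h (fun x hx => hn x (Or.inl hx)) (fun x hx => hf x (Or.inl hx)) r)
      (ih2 v F As h (fun x hx => hn x (Or.inr hx)) (fun x hx => hf x (Or.inr hx)) r)
  | exN x φ ih =>
    intro v F As h hn hf r
    refine exNum_iff hN h _ _ _ _ fun n ρ hρ hn' => ?_
    refine ih _ F _ (h.upd hρ _) (updN φ x v As n ρ hn hn') ?_ _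
    intro y hy; rw [nF]; exact hf y hy
  | allN x φ ih =>
    intro v F As h hn hf r
    refine allNum_iff hN h _ _ _ _ fun n ρ hρ hn' => ?_
    refine ih _ F _ (h.upd hρ _) (updN φ x v As n ρ hn hn') ?_ _
    intro y hy; rw [nF]; exact hf y hy
  | exF x φ ih =>
    intro v F As h hn hf r
    have key : ∀ f ρ, GP S ρ → IsF S ρ f → ((trS φ).sat S (Function.update As (fnV x) ρ) (fnV x) ↔
        φ.sat v (Function.update F x f)) := by
      intro f ρ hρ hf'
      refine ih v _ _ (h.upd hρ _) ?_ (updF φ x F As f ρ hf hf') _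
      intro y hy; rw [Fn]; exact hn y hy
    rw [trS, exFT, ex_sat h]
    simp only [SOForm.sat]
    constructor
    · rintro ⟨ρ, hρ, h'⟩
      rw [cAnd_sat, FUNC_sat hN (h.upd hρ _) (by unfold fnV; omega), Function.update_self] at h'
      obtain ⟨⟨f, hf⟩, h'⟩ := h'
      exact ⟨f, (key f ρ hρ hf).1 h'⟩
    · rintro ⟨f, h'⟩
      obtain ⟨ρ, hρ, hf⟩ := hN.func f
      refine ⟨ρ, hρ, ?_⟩
      rw [cAnd_sat, FUNC_sat hN (h.upd hρ _) (by unfold fnV; omega), Function.update_self]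
      exact ⟨⟨f, hf⟩, (key f ρ hρ hf).2 h'⟩
  | allF x φ ih =>
    intro v F As h hn hf r
    have key : ∀ f ρ, GP S ρ → IsF S ρ f → ((trS φ).sat S (Function.update As (fnV x) ρ) (fnV x) ↔
        φ.sat v (Function.update F x f)) := by
      intro f ρ hρ hf'
      refine ih v _ _ (h.upd hρ _) ?_ (updF φ x F As f ρ hf hf') _
      intro y hy; rw [Fn]; exact hn y hy
    rw [trS, allFT, all_sat h]
    simp only [SOForm.sat]
    constructor
    · intro H f
      obtain ⟨ρ, hρ, hf⟩ := hN.func f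
      have h' := H ρ hρ
      rw [cImp_sat, FUNC_sat hN (h.upd hρ _) (by unfold fnV; omega), Function.update_self] at h'
      exact (key f ρ hρ hf).1 (h' ⟨f, hf⟩)
    · intro H ρ hρ
      rw [cImp_sat, FUNC_sat hN (h.upd hρ _) (by unfold fnV; omega), Function.update_self]
      rintro ⟨f, hf⟩
      exact (key f ρ hρ hf).2 (H f)

end HyperProof

set_option linter.unusedSimpArgs false

/-! ### Part 6: the base sentence and its model -/

namespace HyperProof

def fullS : CTL ℕ := .all 0 (.neg (cF (.neg (cAnd (.ex 1 (.next (.atom 0 1)))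
  (.ex 1 (.next (.neg (.atom 0 1))))))))
def totalS : CTL ℕ := allNum 0 (allNum 1 (.ex 2 (cAnd (meet 1 2 0 0) (cAnd (meet 2 2 0 1)
  (XF (.atom 3 2))))))
def injS : CTL ℕ := .all 0 (.all 1 (cImp (meet 3 0 3 1)
  (cAnd (.neg (before 1 0 1 1)) (.neg (before 2 0 2 1)))))
def Base : CTL ℕ := cAnd fullS (cAnd totalS injS)

variable {S : TS ℕ}

theorem fullS_sat {As : ℕ → ℕ → S.V} (h : GA S As) (r) : fullS.sat S As r ↔
    ∀ ρ, GP S ρ → ∀ j, (∃ σ, S.IsPath σ ∧ σ 0 = ρ j ∧ 0 ∈ S.lab (σ 1)) ∧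
      (∃ σ, S.IsPath σ ∧ σ 0 = ρ j ∧ 0 ∉ S.lab (σ 1)) := by
  rw [fullS, all_sat h]
  simp only [CTL.sat, cF_sat, cAnd_sat, not_exists, not_not, Function.update_self, Nat.zero_add]

theorem totalS_sat {As : ℕ → ℕ → S.V} (h : GA S As) (r) : totalS.sat S As r ↔
    ∀ n ρ, GP S ρ → Num S ρ n → ∀ m ρ', GP S ρ' → Num S ρ' m →
      ∃ σ, GP S σ ∧ T S 1 σ n ∧ T S 2 σ m ∧ ∃ k, T S 3 σ k := by
  rw [totalS, allNum_sat h]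
  refine forall_congr' fun n => forall_congr' fun ρ => forall_congr' fun hρ =>
    forall_congr' fun hn => ?_
  rw [allNum_sat (h.upd hρ 0)]
  refine forall_congr' fun m => forall_congr' fun ρ' => forall_congr' fun hρ' =>
    forall_congr' fun hm => ?_
  rw [ex_sat ((h.upd hρ 0).upd hρ' 1)]
  refine exists_congr fun σ => and_congr_right fun hσ => ?_
  rw [cAnd_sat, cAnd_sat, meet_sat, meet_sat, XF_sat]
  simp only [CTL.sat, Function.update_self, ne_eq, OfNat.ofNat_ne_zero, not_false_eq_true,
    Function.update_of_ne, OfNat.zero_ne_ofNat, one_ne_zero, zero_ne_one, OfNat.one_ne_ofNat,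
    Nat.zero_add]
  have h1 : ∀ k, T S 0 ρ k ↔ k = n := hn
  have h2 : ∀ k, T S 0 ρ' k ↔ k = m := hm
  simp only [h1, h2, exists_eq_right]
  rfl

theorem injS_sat {As : ℕ → ℕ → S.V} (h : GA S As) (r) : injS.sat S As r ↔
    ∀ ρ, GP S ρ → ∀ σ, GP S σ → (∃ k, T S 3 ρ k ∧ T S 3 σ k) →
      (¬ ∃ n m, n < m ∧ T S 1 ρ n ∧ T S 1 σ m) ∧ (¬ ∃ n m, n < m ∧ T S 2 ρ n ∧ T S 2 σ m) := by
  rw [injS, all_sat h]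
  refine forall_congr' fun ρ => forall_congr' fun hρ => ?_
  rw [all_sat (h.upd hρ 0)]
  refine forall_congr' fun σ => forall_congr' fun hσ => ?_
  rw [cImp_sat, cAnd_sat, meet_sat]
  simp only [CTL.sat, before_sat, Function.update_self, ne_eq, not_false_eq_true,
    Function.update_of_ne, zero_ne_one]

theorem Base_nice {As : ℕ → ℕ → S.V} (h : GA S As) (r) (hB : Base.sat S As r) : Nice S := by
  rw [Base, cAnd_sat, cAnd_sat, fullS_sat h, totalS_sat h, injS_sat h] at hB
  obtain ⟨hf, ht, hi⟩ := hB
  have h1 : ∀ X : Set ℕ, ∃ ρ, GP S ρ ∧ ∀ n, T S 0 ρ n ↔ n ∈ X := by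
    classical
    intro X
    -- vertices on initial paths
    let W := {v : S.V // ∃ ρ, GP S ρ ∧ ∃ j, ρ j = v}
    have cat : ∀ (v : W) (σ : ℕ → S.V), S.IsPath σ → σ 0 = v.1 →
        ∃ ρ, GP S ρ ∧ ∃ j, ρ j = σ 1 := by
      rintro ⟨v, ρ, hρ, j, hj⟩ σ hσ h0
      have h0' : σ 0 = ρ j := by rw [h0, hj]
      refine ⟨fun i => if i ≤ j then ρ i else σ (i - j), ⟨?_, ?_⟩, j + 1, by simp⟩
      · intro i
        by_cases c1 : i + 1 ≤ j
        · simp only [c1, show i ≤ j by omega, if_true]; exact hρ.1 i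
        · by_cases c2 : i ≤ j
          · have : i = j := by omega
            subst this
            simp only [c1, le_refl, if_true, if_false, Nat.add_sub_cancel_left]
            rw [← h0']; exact hσ 0
          · simp only [c1, c2, if_false]
            rw [show i + 1 - j = i - j + 1 by omega]
            exact hσ _
      · simpa using hρ.2
    have nx : ∀ (v : W) (n : ℕ), ∃ w : W, S.E v.1 w.1 ∧ (0 ∈ S.lab w.1 ↔ n ∈ X) := by
      intro v n
      obtain ⟨ρ, hρ, j, hj⟩ := v.2
      obtain ⟨⟨σ, p1, p2, p3⟩, ⟨τ, q1, q2, q3⟩⟩ := hf ρ hρ j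
      rw [hj] at p2 q2
      by_cases c : n ∈ X
      · exact ⟨⟨σ 1, cat v σ p1 p2⟩, p2 ▸ p1 0, by simp [p3, c]⟩
      · exact ⟨⟨τ 1, cat v τ q1 q2⟩, q2 ▸ q1 0, by simp [q3, c]⟩
    choose f hf1 hf2 using nx
    let w0 : W := ⟨S.vI, As 0, h 0, 0, (h 0).2⟩
    let π : ℕ → W := fun i => Nat.rec w0 (fun i v => f v i) i
    refine ⟨fun i => (π i).1, ⟨fun i => hf1 (π i) i, rfl⟩, fun n => hf2 (π n) n⟩
  refine ⟨h1, ?_⟩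
  have num : ∀ n, ∃ ρ, GP S ρ ∧ Num S ρ n := fun n => h1 {n}
  have tot : ∀ n m, ∃ σ k, GP S σ ∧ T S 1 σ n ∧ T S 2 σ m ∧ T S 3 σ k := by
    intro n m
    obtain ⟨ρ, hρ, hn⟩ := num n
    obtain ⟨ρ', hρ', hm⟩ := num m
    obtain ⟨σ, a, b, c, k, d⟩ := ht n ρ hρ hn m ρ' hρ' hm
    exact ⟨σ, k, a, b, c, d⟩
  choose σ k g t1 t2 t3 using tot
  intro R
  obtain ⟨ρ, hρ, e⟩ := h1 {j | ∃ n m, R n m ∧ k n m = j}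
  refine ⟨ρ, hρ, fun n m => ⟨?_, fun hR => ?_⟩⟩
  · rintro ⟨τ, hτ, a1, a2, j, a3, a0⟩
    rw [e] at a0
    obtain ⟨n', m', hR, rfl⟩ := a0
    obtain ⟨b1, b2⟩ := hi τ hτ _ (g n' m') ⟨_, a3, t3 n' m'⟩
    obtain ⟨c1, c2⟩ := hi _ (g n' m') τ hτ ⟨_, t3 n' m', a3⟩
    have en : n = n' := by
      rcases lt_trichotomy n n' with hl | hl | hl
      · exact absurd ⟨_, _, hl, a1, t1 n' m'⟩ b1
      · exact hl
      · exact absurd ⟨_, _, hl, t1 n' m', a1⟩ c1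
    have em : m = m' := by
      rcases lt_trichotomy m m' with hl | hl | hl
      · exact absurd ⟨_, _, hl, a2, t2 n' m'⟩ b2
      · exact hl
      · exact absurd ⟨_, _, hl, t2 n' m', a2⟩ c2
    rw [en, em]; exact hR
  · exact ⟨σ n m, g n m, t1 n m, t2 n m, k n m, t3 n m, (e _).2 ⟨n, m, hR, rfl⟩⟩

/-! The concrete model -/

structure V0 : Type where
  i : ℕ
  b : Bool
  x : ℕ
  y : ℕ

def S0 : TS ℕ where
  V := V0
  E := fun v w => w.i = v.i + 1 ∧ (w.x = v.x ∨ (v.x = 0 ∧ w.x = v.i + 1)) ∧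
    (w.y = v.y ∨ (v.y = 0 ∧ w.y = v.i + 1))
  vI := ⟨0, false, 0, 0⟩
  lab := fun v => {a | (a = 0 ∧ v.b = true) ∨ (a = 1 ∧ v.x = v.i) ∨ (a = 2 ∧ v.y = v.i) ∨
    (a = 3 ∧ v.x ≠ 0 ∧ v.y ≠ 0 ∧ Nat.pair v.x v.y = v.i)}
  succ := fun v => ⟨⟨v.i + 1, false, v.x, v.y⟩, rfl, Or.inl rfl, Or.inl rfl⟩

theorem S0_countable : Countable S0.V := by
  have : Function.Injective (fun v : V0 => (v.i, v.b, v.x, v.y)) := by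
    rintro ⟨a, b, c, d⟩ ⟨a', b', c', d'⟩ h
    simp only [Prod.mk.injEq] at h
    obtain ⟨rfl, rfl, rfl, rfl⟩ := h
    rfl
  exact this.countable

theorem S0_fin (v : S0.V) : {w : S0.V | S0.E v w}.Finite := by
  let A : Finset (Bool × ℕ × ℕ) :=
    Finset.univ ×ˢ (({v.x, v.i + 1} : Finset ℕ) ×ˢ ({v.y, v.i + 1} : Finset ℕ))
  refine (A.finite_toSet.image (fun p => (⟨v.i + 1, p.1, p.2.1, p.2.2⟩ : V0))).subset ?_
  rintro ⟨i, b, x, y⟩ ⟨h1, h2, h3⟩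
  simp only at h1 h2 h3
  refine ⟨(b, x, y), ?_, ?_⟩
  · simp only [A, Finset.coe_product, Set.mem_prod, Finset.coe_univ, Set.mem_univ, true_and,
      Finset.mem_coe, Finset.mem_insert, Finset.mem_singleton]
    exact ⟨h2.imp id And.right, h3.imp id And.right⟩
  · simp [h1]

theorem S0_i {ρ} (h : GP S0 ρ) (n : ℕ) : (ρ n : V0).i = n := by
  induction n with
  | zero => rw [h.2]; rfl
  | succ n ih => rw [(h.1 n).1, ih]

theorem S0_x {ρ} (h : GP S0 ρ) (n d : ℕ) (hn : (ρ n : V0).x ≠ 0) :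
    (ρ (n + d) : V0).x = (ρ n : V0).x := by
  induction d with
  | zero => rfl
  | succ d ih =>
    rcases (h.1 (n + d)).2.1 with e | e
    · exact e.trans ih
    · exact absurd (ih.symm.trans e.1) hn

theorem S0_y {ρ} (h : GP S0 ρ) (n d : ℕ) (hn : (ρ n : V0).y ≠ 0) :
    (ρ (n + d) : V0).y = (ρ n : V0).y := by
  induction d with
  | zero => rfl
  | succ d ih =>
    rcases (h.1 (n + d)).2.2 with e | e
    · exact e.trans ih
    · exact absurd (ih.symm.trans e.1) hn

theorem S0_x' {ρ} (h : GP S0 ρ) (n m : ℕ) (hn : (ρ n : V0).x ≠ 0) (hm : (ρ m : V0).x ≠ 0) :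
    (ρ n : V0).x = (ρ m : V0).x := by
  rw [← S0_x h n m hn, ← S0_x h m n hm, Nat.add_comm]

theorem S0_y' {ρ} (h : GP S0 ρ) (n m : ℕ) (hn : (ρ n : V0).y ≠ 0) (hm : (ρ m : V0).y ≠ 0) :
    (ρ n : V0).y = (ρ m : V0).y := by
  rw [← S0_y h n m hn, ← S0_y h m n hm, Nat.add_comm]

theorem S0_T0 (v : V0) : 0 ∈ S0.lab v ↔ v.b = true := by simp [S0]
theorem S0_T1 (v : V0) : 1 ∈ S0.lab v ↔ v.x = v.i := by simp [S0]
theorem S0_T2 (v : V0) : 2 ∈ S0.lab v ↔ v.y = v.i := by simp [S0]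
theorem S0_T3 (v : V0) : 3 ∈ S0.lab v ↔ v.x ≠ 0 ∧ v.y ≠ 0 ∧ Nat.pair v.x v.y = v.i := by simp [S0]

theorem S0_base {As : ℕ → ℕ → S0.V} (h : GA S0 As) (r) : Base.sat S0 As r := by
  rw [Base, cAnd_sat, cAnd_sat, fullS_sat h, totalS_sat h, injS_sat h]
  refine ⟨?_, ?_, ?_⟩
  · intro ρ hρ j
    have key : ∀ b : Bool, ∃ σ, S0.IsPath σ ∧ σ 0 = ρ j ∧ (σ 1 : V0).b = b := by
      intro b
      let v : V0 := ρ j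
      refine ⟨fun k => if k = 0 then v else (⟨v.i + k, b, v.x, v.y⟩ : V0), ?_, rfl, rfl⟩
      intro k
      by_cases c : k = 0
      · subst c; exact ⟨rfl, Or.inl rfl, Or.inl rfl⟩
      · simp only [c, if_false, show k + 1 ≠ 0 by omega]
        exact ⟨rfl, Or.inl rfl, Or.inl rfl⟩
    obtain ⟨σ, a1, a2, a3⟩ := key true
    obtain ⟨τ, b1, b2, b3⟩ := key false
    exact ⟨⟨σ, a1, a2, (S0_T0 _).2 a3⟩, ⟨τ, b1, b2, fun hh => by
      have hh' := (S0_T0 _).1 hh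
      exact Bool.noConfusion (b3.symm.trans hh')⟩⟩
  · intro n _ _ _ m _ _ _
    have l1 := Nat.left_le_pair (n + 1) (m + 1)
    have l2 := Nat.right_le_pair (n + 1) (m + 1)
    refine ⟨fun i => (⟨i, false, if n + 1 ≤ i then n + 1 else 0,
      if m + 1 ≤ i then m + 1 else 0⟩ : V0), ⟨?_, ?_⟩, ?_, ?_, Nat.pair (n + 1) (m + 1) - 1, ?_⟩
    · intro i
      refine ⟨rfl, ?_, ?_⟩
      · show (if n + 1 ≤ i + 1 then n + 1 else 0) = (if n + 1 ≤ i then n + 1 else 0) ∨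
          (if n + 1 ≤ i then n + 1 else 0) = 0 ∧ (if n + 1 ≤ i + 1 then n + 1 else 0) = i + 1
        split_ifs <;> omega
      · show (if m + 1 ≤ i + 1 then m + 1 else 0) = (if m + 1 ≤ i then m + 1 else 0) ∨
          (if m + 1 ≤ i then m + 1 else 0) = 0 ∧ (if m + 1 ≤ i + 1 then m + 1 else 0) = i + 1
        split_ifs <;> omega
    · rfl
    · exact (S0_T1 _).2 (by simp)
    · exact (S0_T2 _).2 (by simp)
    · refine (S0_T3 _).2 ?_
      have e : Nat.pair (n + 1) (m + 1) - 1 + 1 = Nat.pair (n + 1) (m + 1) := by omega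
      simp only [e, l1, l2, if_true]
      exact ⟨by omega, by omega, trivial⟩
  · rintro ρ hρ σ hσ ⟨k, h1, h2⟩
    unfold T at h1 h2
    obtain ⟨a1, a2, a3⟩ := (S0_T3 _).1 h1
    obtain ⟨b1, b2, b3⟩ := (S0_T3 _).1 h2
    replace a3 := a3.trans (S0_i hρ _)
    replace b3 := (b3.trans (S0_i hσ _)).trans a3.symm
    obtain ⟨e1, e2⟩ := Nat.pair_eq_pair.1 b3
    constructor
    · rintro ⟨n, m, hl, c1, c2⟩
      unfold T at c1 c2
      replace c1 := ((S0_T1 _).1 c1).trans (S0_i hρ _)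
      replace c2 := ((S0_T1 _).1 c2).trans (S0_i hσ _)
      have d1 := S0_x' hρ (n + 1) (k + 1) (by omega) a1
      have d2 := S0_x' hσ (m + 1) (k + 1) (by omega) b1
      omega
    · rintro ⟨n, m, hl, c1, c2⟩
      unfold T at c1 c2
      replace c1 := ((S0_T2 _).1 c1).trans (S0_i hρ _)
      replace c2 := ((S0_T2 _).1 c2).trans (S0_i hσ _)
      have d1 := S0_y' hρ (n + 1) (k + 1) (by omega) a2
      have d2 := S0_y' hσ (m + 1) (k + 1) (by omega) b2
      omega

def PhiS (φ : SOForm) : CTL ℕ := cAnd Base (trS φ)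

theorem exists_path (S : TS ℕ) : ∃ ρ, GP S ρ := by
  choose f hf using S.succ
  exact ⟨fun i => Nat.rec S.vI (fun _ v => f v) i, fun i => hf _, rfl⟩

theorem PhiS_iff (φ : SOForm) (h1 : φ.freeN = ∅) (h2 : φ.freeF = ∅) (P : TS ℕ → Prop)
    (hP : P S0) : (∃ S, P S ∧ CModels S (PhiS φ)) ↔ SOTrue φ := by
  have tr : ∀ {S : TS ℕ} (_ : Nice S) (As : ℕ → ℕ → S.V) (_ : GA S As) r,
      (trS φ).sat S As r ↔ SOTrue φ := by
    intro S hN As h r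
    refine trS_sat hN φ _ _ As h ?_ ?_ r
    · intro x hx; rw [h1] at hx; exact hx.elim
    · intro x hx; rw [h2] at hx; exact hx.elim
  constructor
  · rintro ⟨S, -, hm⟩
    obtain ⟨ρ, hρ⟩ := exists_path S
    have h := hm ρ hρ.1 hρ.2
    have hG : GA S (fun _ => ρ) := fun _ => hρ
    rw [PhiS, cAnd_sat] at h
    exact (tr (Base_nice hG _ h.1) _ hG _).1 h.2
  · intro ht
    refine ⟨S0, hP, fun ρ hρ h0 => ?_⟩
    have hG : GA S0 (fun _ => ρ) := fun _ => ⟨hρ, h0⟩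
    have hB := S0_base hG 0
    rw [PhiS, cAnd_sat]
    exact ⟨hB, (tr (Base_nice hG _ hB) _ hG _).2 ht⟩

end HyperProof

set_option linter.unusedSimpArgs false

/-! ### Part 7: free variables and computability of the translation -/

namespace HyperProof

theorem fv_cAnd (φ ψ : CTL ℕ) (x) : x ∈ (cAnd φ ψ).freeVars ↔ x ∈ φ.freeVars ∨ x ∈ ψ.freeVars :=
  Iff.rfl
theorem fv_cImp (φ ψ : CTL ℕ) (x) : x ∈ (cImp φ ψ).freeVars ↔ x ∈ φ.freeVars ∨ x ∈ ψ.freeVars :=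
  Iff.rfl
theorem fv_XF (φ : CTL ℕ) (x) : x ∈ (XF φ).freeVars ↔ x ∈ φ.freeVars := by
  simp [XF, cF, CTL.freeVars]
theorem fv_cF (φ : CTL ℕ) (x) : x ∈ (cF φ).freeVars ↔ x ∈ φ.freeVars := by
  simp [cF, CTL.freeVars]
theorem fv_atom (a v x : ℕ) : x ∈ (CTL.atom a v).freeVars ↔ x = v := Iff.rfl
theorem fv_next (φ : CTL ℕ) (x) : x ∈ φ.next.freeVars ↔ x ∈ φ.freeVars := Iff.rfl
theorem fv_neg (φ : CTL ℕ) (x) : x ∈ φ.neg.freeVars ↔ x ∈ φ.freeVars := Iff.rfl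
theorem fv_disj (φ ψ : CTL ℕ) (x) :
    x ∈ (φ.disj ψ).freeVars ↔ x ∈ φ.freeVars ∨ x ∈ ψ.freeVars := Iff.rfl
theorem fv_ex (v : ℕ) (φ : CTL ℕ) (x) : x ∈ (CTL.ex v φ).freeVars ↔ x ∈ φ.freeVars ∧ x ≠ v :=
  Iff.rfl
theorem fv_all (v : ℕ) (φ : CTL ℕ) (x) : x ∈ (CTL.all v φ).freeVars ↔ x ∈ φ.freeVars ∧ x ≠ v :=
  Iff.rfl
theorem fv_meet (a v b w x : ℕ) : x ∈ (meet a v b w).freeVars ↔ x = v ∨ x = w := by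
  simp only [meet, fv_XF, fv_cAnd, fv_atom]
theorem fv_before (a v b w x : ℕ) : x ∈ (before a v b w).freeVars ↔ x = v ∨ x = w := by
  simp only [before, fv_XF, fv_cAnd, fv_atom]
theorem fv_SUCC (v w x : ℕ) : x ∈ (SUCC v w).freeVars ↔ x = v ∨ x = w := by
  simp only [SUCC, fv_XF, fv_cAnd, fv_atom, fv_next]
theorem fv_ZERO (v x : ℕ) : x ∈ (ZERO v).freeVars ↔ x = v := Iff.rfl
theorem fv_ONE (v x : ℕ) : x ∈ (ONE v).freeVars ↔ x = v := Iff.rfl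
theorem fv_exNum (v : ℕ) (φ : CTL ℕ) (x) :
    x ∈ (exNum v φ).freeVars ↔ x ∈ φ.freeVars ∧ x ≠ v := by
  simp only [exNum, Sing, fv_ex, fv_XF, fv_cAnd, fv_atom, fv_neg, fv_before]; tauto
theorem fv_allNum (v : ℕ) (φ : CTL ℕ) (x) :
    x ∈ (allNum v φ).freeVars ↔ x ∈ φ.freeVars ∧ x ≠ v := by
  simp only [allNum, Sing, fv_all, fv_XF, fv_cAnd, fv_cImp, fv_atom, fv_neg, fv_before]; tauto
theorem fv_Rel (g y z x : ℕ) :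
    x ∈ (Rel g y z).freeVars ↔ (x = y ∨ x = z ∨ x = g) ∧ x ≠ 10 := by
  simp only [Rel, fv_ex, fv_cAnd, fv_meet]; tauto
theorem fv_stepA (x : ℕ) : x ∈ stepA.freeVars ↔ x = 3 := by
  simp only [stepA, fv_allNum, fv_cImp, fv_cAnd, fv_Rel, fv_SUCC]; omega
theorem fv_ADD (a b c x : ℕ) (h : x ∈ (ADD a b c).freeVars) : x = a ∨ x = b ∨ x = c := by
  simp only [ADD, fv_all, fv_allNum, fv_cImp, fv_cAnd, fv_Rel, fv_ZERO, fv_stepA] at h; omega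
theorem fv_MUL (a b c x : ℕ) (h : x ∈ (MUL a b c).freeVars) : x = a ∨ x = b ∨ x = c := by
  have := fv_ADD 13 a 15 x
  simp only [MUL, stepM, fv_all, fv_allNum, fv_cImp, fv_cAnd, fv_Rel, fv_ZERO, fv_SUCC] at h
  grind
theorem fv_FUNC (g x : ℕ) (h : x ∈ (FUNC g).freeVars) : x = g := by
  simp only [FUNC, fv_allNum, fv_exNum, fv_cImp, fv_cAnd, fv_Rel, fv_meet] at h; omega
theorem fv_Base (x : ℕ) : x ∉ Base.freeVars := by
  simp only [Base, fullS, totalS, injS, fv_allNum, fv_exNum, fv_cImp, fv_cAnd, fv_meet, fv_all,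
    fv_ex, fv_before, fv_neg, fv_cF, fv_XF, fv_next, fv_atom]
  omega

theorem fv_evT (v : ℕ) (X : CTL ℕ) (x) :
    x ∈ (evT v X).freeVars ↔ (x = v ∨ x ∈ X.freeVars) ∧ x ≠ 0 := by
  simp only [evT, fv_exNum, fv_cAnd, fv_meet]; tauto

theorem trT_low (t : ATerm) : ∀ x ∈ (trT t).freeVars, x < 20 → x = 0 := by
  induction t with
  | var y => intro x; simp only [trT, fv_meet, numV]; omega
  | zero => intro x; simp only [trT, fv_ZERO]; omega
  | one => intro x; simp only [trT, fv_ONE]; omega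
  | add s t ih1 ih2 =>
    intro x; have := ih1 x; have := ih2 x; have := fv_ADD 1 2 0 x
    simp only [trT, addT, fv_exNum, fv_cAnd, fv_evT]; grind
  | mul s t ih1 ih2 =>
    intro x; have := ih1 x; have := ih2 x; have := fv_MUL 1 2 0 x
    simp only [trT, mulT, fv_exNum, fv_cAnd, fv_evT]; grind
  | app f t ih =>
    intro x; have := ih x
    simp only [trT, appT, fv_exNum, fv_cAnd, fv_evT, fv_Rel, fnV]; grind

theorem trT_high (t : ATerm) : (∀ y, numV y ∈ (trT t).freeVars ↔ y ∈ t.freeN) ∧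
    (∀ y, fnV y ∈ (trT t).freeVars ↔ y ∈ t.freeF) := by
  induction t with
  | var y =>
    simp only [trT, fv_meet, numV, fnV, ATerm.freeN, ATerm.freeF, Set.mem_singleton_iff,
      Set.mem_empty_iff_false]
    constructor <;> intro z
    · constructor
      · intro h; show z = y; omega
      · intro h; have h' : z = y := h; omega
    · constructor
      · intro h; exfalso; omega
      · intro h; exact h.elim
  | zero => simp [trT, fv_ZERO, numV, fnV, ATerm.freeN, ATerm.freeF]
  | one => simp [trT, fv_ONE, numV, fnV, ATerm.freeN, ATerm.freeF]
  | add s t ih1 ih2 =>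
    constructor <;> intro y
    · have := ih1.1 y; have := ih2.1 y; have := fv_ADD 1 2 0 (numV y)
      simp only [trT, addT, fv_exNum, fv_cAnd, fv_evT, ATerm.freeN, Set.mem_union]
      have : 20 ≤ numV y := by unfold numV; omega
      grind
    · have := ih1.2 y; have := ih2.2 y; have := fv_ADD 1 2 0 (fnV y)
      simp only [trT, addT, fv_exNum, fv_cAnd, fv_evT, ATerm.freeF, Set.mem_union]
      have : 20 ≤ fnV y := by unfold fnV; omega
      grind
  | mul s t ih1 ih2 =>
    constructor <;> intro y
    · have := ih1.1 y; have := ih2.1 y; have := fv_MUL 1 2 0 (numV y)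
      simp only [trT, mulT, fv_exNum, fv_cAnd, fv_evT, ATerm.freeN, Set.mem_union]
      have : 20 ≤ numV y := by unfold numV; omega
      grind
    · have := ih1.2 y; have := ih2.2 y; have := fv_MUL 1 2 0 (fnV y)
      simp only [trT, mulT, fv_exNum, fv_cAnd, fv_evT, ATerm.freeF, Set.mem_union]
      have : 20 ≤ fnV y := by unfold fnV; omega
      grind
  | app f t ih =>
    constructor <;> intro y
    · have := ih.1 y
      simp only [trT, appT, fv_exNum, fv_cAnd, fv_evT, fv_Rel, ATerm.freeN]
      have : 20 ≤ numV y := by unfold numV; omega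
      have : numV y ≠ fnV f := by unfold numV fnV; omega
      grind
    · have := ih.2 y
      simp only [trT, appT, fv_exNum, fv_cAnd, fv_evT, fv_Rel, ATerm.freeF, Set.mem_insert_iff]
      have : 20 ≤ fnV y := by unfold fnV; omega
      have : fnV y = fnV f ↔ y = f := by unfold fnV; omega
      grind

theorem trS_low (φ : SOForm) : ∀ x ∈ (trS φ).freeVars, 20 ≤ x := by
  induction φ with
  | eq s t =>
    intro x; have := trT_low s x; have := trT_low t x
    simp only [trS, eqT, fv_exNum, fv_cAnd]; grind
  | lt s t =>
    intro x; have := trT_low s x; have := trT_low t x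
    simp only [trS, ltT, fv_exNum, fv_cAnd, fv_evT, fv_before]; grind
  | neg φ ih => exact ih
  | disj φ ψ ih1 ih2 => rintro n (h | h); exacts [ih1 n h, ih2 n h]
  | exN y φ ih => intro x; have := ih x; simp only [trS, fv_exNum]; tauto
  | allN y φ ih => intro x; have := ih x; simp only [trS, fv_allNum]; tauto
  | exF y φ ih =>
    intro x; have := ih x; have := fv_FUNC (fnV y) x
    simp only [trS, exFT, fv_ex, fv_cAnd]; tauto
  | allF y φ ih =>
    intro x; have := ih x; have := fv_FUNC (fnV y) x
    simp only [trS, allFT, fv_all, fv_cImp]; tauto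

theorem trS_high (φ : SOForm) : (∀ y, numV y ∈ (trS φ).freeVars ↔ y ∈ φ.freeN) ∧
    (∀ y, fnV y ∈ (trS φ).freeVars ↔ y ∈ φ.freeF) := by
  have hn : ∀ y, 20 ≤ numV y := by unfold numV; omega
  have hf : ∀ y, 20 ≤ fnV y := by unfold fnV; omega
  have hnf : ∀ y z, numV y ≠ fnV z := by unfold numV fnV; omega
  have hnn : ∀ y z, numV y = numV z ↔ y = z := by unfold numV; omega
  have hff : ∀ y z, fnV y = fnV z ↔ y = z := by unfold fnV; omega
  induction φ with
  | eq s t =>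
    have a := trT_high s; have b := trT_high t
    constructor <;> intro y
    · have := hn y
      simp only [trS, eqT, fv_exNum, fv_cAnd, SOForm.freeN, Set.mem_union, a.1, b.1]; grind
    · have := hf y
      simp only [trS, eqT, fv_exNum, fv_cAnd, SOForm.freeF, Set.mem_union, a.2, b.2]; grind
  | lt s t =>
    have a := trT_high s; have b := trT_high t
    constructor <;> intro y
    · have := hn y
      simp only [trS, ltT, fv_exNum, fv_cAnd, fv_evT, fv_before, SOForm.freeN, Set.mem_union,
        a.1, b.1]; grind
    · have := hf y
      simp only [trS, ltT, fv_exNum, fv_cAnd, fv_evT, fv_before, SOForm.freeF, Set.mem_union,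
        a.2, b.2]; grind
  | neg φ ih => exact ih
  | disj φ ψ ih1 ih2 =>
    exact ⟨fun y => or_congr (ih1.1 y) (ih2.1 y), fun y => or_congr (ih1.2 y) (ih2.2 y)⟩
  | exN z φ ih =>
    constructor <;> intro y
    · simp only [trS, fv_exNum, SOForm.freeN, Set.mem_sdiff, Set.mem_singleton_iff, ih.1, ne_eq, hnn]
    · have := hnf z y
      simp only [trS, fv_exNum, SOForm.freeF, ih.2]; tauto
  | allN z φ ih =>
    constructor <;> intro y
    · simp only [trS, fv_allNum, SOForm.freeN, Set.mem_sdiff, Set.mem_singleton_iff, ih.1, ne_eq, hnn]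
    · have := hnf z y
      simp only [trS, fv_allNum, SOForm.freeF, ih.2]; tauto
  | exF z φ ih =>
    constructor <;> intro y
    · have := hnf y z; have := fv_FUNC (fnV z) (numV y)
      simp only [trS, exFT, fv_ex, fv_cAnd, SOForm.freeN, ih.1]; tauto
    · have := hff y z; have := fv_FUNC (fnV z) (fnV y)
      simp only [trS, exFT, fv_ex, fv_cAnd, SOForm.freeF, ih.2, Set.mem_sdiff,
        Set.mem_singleton_iff]; tauto
  | allF z φ ih =>
    constructor <;> intro y
    · have := hnf y z; have := fv_FUNC (fnV z) (numV y)
      simp only [trS, allFT, fv_all, fv_cImp, SOForm.freeN, ih.1]; tauto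
    · have := hff y z; have := fv_FUNC (fnV z) (fnV y)
      simp only [trS, allFT, fv_all, fv_cImp, SOForm.freeF, ih.2, Set.mem_sdiff,
        Set.mem_singleton_iff]; tauto

theorem trS_guarded (φ : SOForm) : (trS φ).guarded := by
  induction φ with
  | neg φ ih => exact ih
  | disj φ ψ ih1 ih2 => exact ⟨ih1, ih2⟩
  | _ => trivial

theorem PhiS_sent (φ : SOForm) : (PhiS φ).IsSentence ↔ φ.IsSentence := by
  have hg : (PhiS φ).guarded := ⟨⟨trivial, trivial, trivial⟩, trS_guarded φ⟩
  unfold CTL.IsSentence SOForm.IsSentence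
  rw [Set.eq_empty_iff_forall_notMem, Set.eq_empty_iff_forall_notMem (s := SOForm.freeN _),
    Set.eq_empty_iff_forall_notMem (s := SOForm.freeF _)]
  rw [and_iff_left hg]
  simp only [PhiS, fv_cAnd, fv_Base, false_or]
  constructor
  · intro h
    exact ⟨fun y hy => h _ (((trS_high φ).1 y).2 hy), fun y hy => h _ (((trS_high φ).2 y).2 hy)⟩
  · rintro ⟨h1, h2⟩ x hx
    have h20 := trS_low φ x hx
    rcases Nat.even_or_odd' (x - 20) with ⟨k, hk | hk⟩
    · rw [show x = numV k by unfold numV; omega] at hx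
      exact h1 k (((trS_high φ).1 k).1 hx)
    · rw [show x = fnV k by unfold fnV; omega] at hx
      exact h2 k (((trS_high φ).2 k).1 hx)

/-! Templates -/

/-- A formula template whose code is primitive recursive in the codes of its arguments. -/
def CC (F : ℕ → CTL ℕ → CTL ℕ → CTL ℕ) : Prop :=
  ∃ G : ℕ × ℕ × ℕ → ℕ, Primrec G ∧ ∀ n X Y, (F n X Y).code = G (n, X.code, Y.code)

theorem CC_const (φ : CTL ℕ) : CC (fun _ _ _ => φ) := ⟨fun _ => φ.code, Primrec.const _, fun _ _ _ => rfl⟩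
theorem CC_X : CC (fun _ X _ => X) :=
  ⟨fun p => p.2.1, Primrec.fst.comp Primrec.snd, fun _ _ _ => rfl⟩
theorem CC_Y : CC (fun _ _ Y => Y) :=
  ⟨fun p => p.2.2, Primrec.snd.comp Primrec.snd, fun _ _ _ => rfl⟩
theorem CC_atom (a : ℕ) {f : ℕ → ℕ} (hf : Primrec f) : CC (fun n _ _ => .atom a (f n)) :=
  ⟨fun p => Nat.pair 0 (Nat.pair a (f p.1)),
    pr_pair2 0 (Primrec.const a) (hf.comp Primrec.fst), fun _ _ _ => rfl⟩
theorem CC_neg {F} (h : CC F) : CC (fun n X Y => .neg (F n X Y)) := by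
  obtain ⟨G, p, e⟩ := h
  exact ⟨fun q => Nat.pair 1 (G q), pr_pairc 1 p, fun n X Y => by simp only [CTL.code, e]⟩
theorem CC_next {F} (h : CC F) : CC (fun n X Y => .next (F n X Y)) := by
  obtain ⟨G, p, e⟩ := h
  exact ⟨fun q => Nat.pair 3 (G q), pr_pairc 3 p, fun n X Y => by simp only [CTL.code, e]⟩
theorem CC_disj {F F'} (h : CC F) (h' : CC F') : CC (fun n X Y => .disj (F n X Y) (F' n X Y)) := by
  obtain ⟨G, p, e⟩ := h
  obtain ⟨G', p', e'⟩ := h'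
  exact ⟨fun q => Nat.pair 2 (Nat.pair (G q) (G' q)), pr_pair2 2 p p',
    fun n X Y => by simp only [CTL.code, e, e']⟩
theorem CC_untl {F F'} (h : CC F) (h' : CC F') : CC (fun n X Y => .untl (F n X Y) (F' n X Y)) := by
  obtain ⟨G, p, e⟩ := h
  obtain ⟨G', p', e'⟩ := h'
  exact ⟨fun q => Nat.pair 4 (Nat.pair (G q) (G' q)), pr_pair2 4 p p',
    fun n X Y => by simp only [CTL.code, e, e']⟩
theorem CC_ex {f : ℕ → ℕ} (hf : Primrec f) {F} (h : CC F) :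
    CC (fun n X Y => .ex (f n) (F n X Y)) := by
  obtain ⟨G, p, e⟩ := h
  exact ⟨fun q => Nat.pair 5 (Nat.pair (f q.1) (G q)), pr_pair2 5 (hf.comp Primrec.fst) p,
    fun n X Y => by simp only [CTL.code, e]⟩
theorem CC_all {f : ℕ → ℕ} (hf : Primrec f) {F} (h : CC F) :
    CC (fun n X Y => .all (f n) (F n X Y)) := by
  obtain ⟨G, p, e⟩ := h
  exact ⟨fun q => Nat.pair 6 (Nat.pair (f q.1) (G q)), pr_pair2 6 (hf.comp Primrec.fst) p,
    fun n X Y => by simp only [CTL.code, e]⟩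
theorem CC_cAnd {F F'} (h : CC F) (h' : CC F') : CC (fun n X Y => cAnd (F n X Y) (F' n X Y)) :=
  CC_neg (CC_disj (CC_neg h) (CC_neg h'))
theorem CC_cImp {F F'} (h : CC F) (h' : CC F') : CC (fun n X Y => cImp (F n X Y) (F' n X Y)) :=
  CC_disj (CC_neg h) h'
theorem CC_XF {F} (h : CC F) : CC (fun n X Y => XF (F n X Y)) :=
  CC_next (CC_untl (CC_disj h (CC_neg h)) h)
theorem CC_meet (a b : ℕ) {f g : ℕ → ℕ} (hf : Primrec f) (hg : Primrec g) :
    CC (fun n _ _ => meet a (f n) b (g n)) :=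
  CC_XF (CC_cAnd (CC_atom a hf) (CC_atom b hg))
theorem CC_before (a b : ℕ) {f g : ℕ → ℕ} (hf : Primrec f) (hg : Primrec g) :
    CC (fun n _ _ => before a (f n) b (g n)) :=
  CC_XF (CC_cAnd (CC_atom a hf) (CC_XF (CC_atom b hg)))
theorem CC_Sing {f : ℕ → ℕ} (hf : Primrec f) : CC (fun n _ _ => Sing (f n)) :=
  CC_cAnd (CC_XF (CC_atom 0 hf)) (CC_neg (CC_before 0 0 hf hf))
theorem CC_exNum {f : ℕ → ℕ} (hf : Primrec f) {F} (h : CC F) :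
    CC (fun n X Y => exNum (f n) (F n X Y)) := CC_ex hf (CC_cAnd (CC_Sing hf) h)
theorem CC_allNum {f : ℕ → ℕ} (hf : Primrec f) {F} (h : CC F) :
    CC (fun n X Y => allNum (f n) (F n X Y)) := CC_all hf (CC_cImp (CC_Sing hf) h)

theorem pk (k : ℕ) : Primrec (fun _ : ℕ => k) := Primrec.const k

theorem CC_Rel {f g k : ℕ → ℕ} (hf : Primrec f) (hg : Primrec g) (hk : Primrec k) :
    CC (fun n _ _ => Rel (f n) (g n) (k n)) :=
  CC_ex (pk 10) (CC_cAnd (CC_meet 1 0 (pk 10) hg) (CC_cAnd (CC_meet 2 0 (pk 10) hk)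
    (CC_meet 3 0 (pk 10) hf)))
theorem CC_FUNC {f : ℕ → ℕ} (hf : Primrec f) : CC (fun n _ _ => FUNC (f n)) :=
  CC_cAnd (CC_allNum (pk 4) (CC_exNum (pk 5) (CC_Rel hf (pk 4) (pk 5))))
    (CC_allNum (pk 4) (CC_allNum (pk 5) (CC_allNum (pk 6) (CC_cImp
      (CC_cAnd (CC_Rel hf (pk 4) (pk 5)) (CC_Rel hf (pk 4) (pk 6)))
      (CC_meet 0 0 (pk 5) (pk 6))))))
theorem CC_evT (v : ℕ) {F} (h : CC F) : CC (fun n X Y => evT v (F n X Y)) :=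
  CC_exNum (pk 0) (CC_cAnd (CC_meet 0 0 (pk 0) (pk v)) h)
theorem pr_numV : Primrec numV :=
  Primrec.nat_add.comp (Primrec.nat_mul.comp (Primrec.const 2) Primrec.id) (Primrec.const 20)
theorem pr_fnV : Primrec fnV :=
  Primrec.nat_add.comp (Primrec.nat_mul.comp (Primrec.const 2) Primrec.id) (Primrec.const 21)
theorem CC_addT : CC (fun _ X Y => addT X Y) :=
  CC_exNum (pk 1) (CC_exNum (pk 2) (CC_cAnd (CC_evT 1 CC_X) (CC_cAnd (CC_evT 2 CC_Y)
    (CC_const _))))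
theorem CC_mulT : CC (fun _ X Y => mulT X Y) :=
  CC_exNum (pk 1) (CC_exNum (pk 2) (CC_cAnd (CC_evT 1 CC_X) (CC_cAnd (CC_evT 2 CC_Y)
    (CC_const _))))
theorem CC_appT : CC (fun n _ Y => appT n Y) :=
  CC_exNum (pk 1) (CC_cAnd (CC_evT 1 CC_Y) (CC_Rel pr_fnV (pk 1) (pk 0)))
theorem CC_ltT : CC (fun _ X Y => ltT X Y) :=
  CC_exNum (pk 1) (CC_exNum (pk 2) (CC_cAnd (CC_evT 1 CC_X) (CC_cAnd (CC_evT 2 CC_Y)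
    (CC_const _))))
theorem CC_eqT : CC (fun _ X Y => eqT X Y) := CC_exNum (pk 0) (CC_cAnd CC_X CC_Y)
theorem CC_exFT : CC (fun n _ Y => exFT n Y) := CC_ex pr_fnV (CC_cAnd (CC_FUNC pr_fnV) CC_Y)
theorem CC_allFT : CC (fun n _ Y => allFT n Y) := CC_all pr_fnV (CC_cImp (CC_FUNC pr_fnV) CC_Y)

theorem at0 : (CTL.atom 0 0).code = 0 := by
  simp [CTL.code, show Nat.pair 0 0 = 0 from rfl]

theorem trT_code : ∃ h : ℕ → ℕ, Primrec h ∧ ∀ t, h (ATerm.code t) = (trT t).code := by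
  obtain ⟨G0, p0, e0⟩ := CC_meet 0 0 (pk 0) pr_numV
  obtain ⟨G3, p3, e3⟩ := CC_addT
  obtain ⟨G4, p4, e4⟩ := CC_mulT
  obtain ⟨G5, p5, e5⟩ := CC_appT
  obtain ⟨h, hp, k0, k1, -⟩ := codeRec 6 (fun m => G0 (m, 0, 0))
    (p0.comp (Primrec.pair Primrec.id (Primrec.const (0, 0))))
    (fun k e => match k with
      | 1 => (ZERO 0).code
      | 2 => (ONE 0).code
      | 3 => G3 (0, e.2.2.1, e.2.2.2)
      | 4 => G4 (0, e.2.2.1, e.2.2.2)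
      | _ => G5 (e.1.unpair.1, 0, e.2.2.2))
    (by
      intro k
      have c3 := p3.comp (Primrec.pair (Primrec.const 0) (Primrec.pair pr_ha pr_hb))
      have c4 := p4.comp (Primrec.pair (Primrec.const 0) (Primrec.pair pr_ha pr_hb))
      have c5 := p5.comp (Primrec.pair pr_a (Primrec.pair (Primrec.const 0) pr_hb))
      match k with
      | 0 => exact c5
      | 1 => exact Primrec.const _
      | 2 => exact Primrec.const _
      | 3 => exact c3
      | 4 => exact c4
      | (n + 5) => exact c5)
    (by omega)
  refine ⟨h, hp, fun t => ?_⟩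
  induction t with
  | var x =>
    have := e0 x (.atom 0 0) (.atom 0 0)
    rw [at0] at this
    simp only [ATerm.code, trT, k0, this]
  | zero => exact k1 _ _ (by omega) (by omega)
  | one => exact k1 _ _ (by omega) (by omega)
  | add s t ih1 ih2 =>
    simp only [ATerm.code, trT, e3 0 (trT s) (trT t)]
    rw [k1 _ _ (by omega) (by omega), ← ih1, ← ih2]
    simp
  | mul s t ih1 ih2 =>
    simp only [ATerm.code, trT, e4 0 (trT s) (trT t)]
    rw [k1 _ _ (by omega) (by omega), ← ih1, ← ih2]
    simp
  | app f t ih =>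
    have := e5 f (.atom 0 0) (trT t)
    rw [at0] at this
    simp only [ATerm.code, trT, this]
    rw [k1 _ _ (by omega) (by omega), ← ih]
    simp

theorem trS_code : ∃ h : ℕ → ℕ, Primrec h ∧ ∀ φ, h (SOForm.code φ) = (trS φ).code := by
  obtain ⟨u, up, hu⟩ := trT_code
  obtain ⟨G0, p0, e0⟩ := CC_eqT
  obtain ⟨G1, p1, e1⟩ := CC_ltT
  obtain ⟨G4, p4, e4⟩ := CC_exNum pr_numV CC_Y
  obtain ⟨G5, p5, e5⟩ := CC_allNum pr_numV CC_Y
  obtain ⟨G6, p6, e6⟩ := CC_exFT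
  obtain ⟨G7, p7, e7⟩ := CC_allFT
  have ua : Primrec (fun m : ℕ => u m.unpair.1) := up.comp (Primrec.fst.comp Primrec.unpair)
  have ub : Primrec (fun m : ℕ => u m.unpair.2) := up.comp (Primrec.snd.comp Primrec.unpair)
  obtain ⟨h, hp, k0, k1, -⟩ := codeRec 8 (fun m => G0 (0, u m.unpair.1, u m.unpair.2))
    (p0.comp (Primrec.pair (Primrec.const 0) (Primrec.pair ua ub)))
    (fun k e => match k with
      | 1 => G1 (0, u e.1.unpair.1, u e.1.unpair.2)
      | 2 => Nat.pair 1 e.2.1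
      | 3 => Nat.pair 2 (Nat.pair e.2.2.1 e.2.2.2)
      | 4 => G4 (e.1.unpair.1, 0, e.2.2.2)
      | 5 => G5 (e.1.unpair.1, 0, e.2.2.2)
      | 6 => G6 (e.1.unpair.1, 0, e.2.2.2)
      | _ => G7 (e.1.unpair.1, 0, e.2.2.2))
    (by
      intro k
      have q := Primrec.pair pr_a (Primrec.pair (Primrec.const 0) pr_hb)
      match k with
      | 0 => exact p7.comp q
      | 1 => exact p1.comp (Primrec.pair (Primrec.const 0)
          (Primrec.pair (ua.comp Primrec.fst) (ub.comp Primrec.fst)))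
      | 2 => exact pr_pairc 1 pr_hm
      | 3 => exact pr_pair2 2 pr_ha pr_hb
      | 4 => exact p4.comp q
      | 5 => exact p5.comp q
      | 6 => exact p6.comp q
      | (n + 7) => exact p7.comp q)
    (by omega)
  refine ⟨h, hp, fun φ => ?_⟩
  induction φ with
  | eq s t =>
    simp only [SOForm.code, trS, e0 0 (trT s) (trT t), k0, Nat.unpair_pair, hu]
  | lt s t =>
    simp only [SOForm.code, trS, e1 0 (trT s) (trT t)]
    rw [k1 _ _ (by omega) (by omega)]
    simp only [Nat.unpair_pair, hu]
  | neg φ ih =>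
    simp only [SOForm.code, trS, CTL.code]
    rw [k1 _ _ (by omega) (by omega), ← ih]
    rfl
  | disj φ ψ ih1 ih2 =>
    simp only [SOForm.code, trS, CTL.code]
    rw [k1 _ _ (by omega) (by omega), ← ih1, ← ih2]
    simp
  | exN x φ ih =>
    have := e4 x (.atom 0 0) (trS φ)
    rw [at0] at this
    simp only [SOForm.code, trS, this]
    rw [k1 _ _ (by omega) (by omega), ← ih]
    simp
  | allN x φ ih =>
    have := e5 x (.atom 0 0) (trS φ)
    rw [at0] at this
    simp only [SOForm.code, trS, this]
    rw [k1 _ _ (by omega) (by omega), ← ih]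
    simp
  | exF x φ ih =>
    have := e6 x (.atom 0 0) (trS φ)
    rw [at0] at this
    simp only [SOForm.code, trS, this]
    rw [k1 _ _ (by omega) (by omega), ← ih]
    simp
  | allF x φ ih =>
    have := e7 x (.atom 0 0) (trS φ)
    rw [at0] at this
    simp only [SOForm.code, trS, this]
    rw [k1 _ _ (by omega) (by omega), ← ih]
    simp

theorem SOtoCTL (P : TS ℕ → Prop) (hP : P S0) :
    ManyOneRed SOTruthCodes {n | ∃ φ : CTL ℕ, φ.IsSentence ∧ φ.code = n ∧
      ∃ S : TS ℕ, P S ∧ CModels S φ} := by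
  obtain ⟨v, vp, hv⟩ := validSO
  obtain ⟨h, hp, he⟩ := trS_code
  obtain ⟨G, Gp, hG⟩ := CC_cAnd (CC_const Base) CC_X
  have := mkRed SOForm.code CTL.code CTL_code_inj (fun φ => φ.IsSentence ∧ SOTrue φ)
    (fun φ => φ.IsSentence ∧ ∃ S : TS ℕ, P S ∧ CModels S φ) SOForm_code_inj v vp hv
    (fun _ => 1) (Primrec.const 1) (fun _ => Or.inl one_ne_zero)
    PhiS (fun n => G (0, h n, 0))
    (Gp.comp (Primrec.pair (Primrec.const _) (Primrec.pair hp (Primrec.const _))))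
    (by
      intro φ
      have := hG 0 (trS φ) (.atom 0 0)
      rw [at0] at this
      simp only [PhiS, this, he])
    (.atom 0 0)
    (by
      rintro ⟨⟨h, -⟩, -⟩
      have : (0 : ℕ) ∈ (∅ : Set ℕ) := by rw [← h]; simp [CTL.freeVars]
      exact this)
    (by
      intro φ _
      rw [PhiS_sent]
      exact and_congr_right fun hs => (PhiS_iff φ hs.1 hs.2 P hP).symm)
  convert this using 1
  · ext n; simp only [Set.mem_ofPred_eq, SOTruthCodes]; exact exists_congr fun _ => by tauto
  · ext n; simp only [Set.mem_ofPred_eq]; exact exists_congr fun _ => by tauto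

theorem SO_to_countable : ManyOneRed SOTruthCodes CTLCountableSatCodes :=
  SOtoCTL (fun S => Countable S.V) S0_countable

theorem SO_to_fin : ManyOneRed SOTruthCodes CTLFinBranchSatCodes :=
  SOtoCTL (fun S => ∀ v : S.V, {w : S.V | S.E v w}.Finite) S0_fin

end HyperProof


/-- **HyperCTL* countable satisfiability, HyperCTL* finitely-branching
satisfiability, and truth in second-order arithmetic are pairwise effectively
interreducible** (many-one, via total computable functions on codes). -/
theorem hyperctl_variants_interreducible :
    ManyOneRed CTLCountableSatCodes CTLFinBranchSatCodes ∧
    ManyOneRed CTLFinBranchSatCodes CTLCountableSatCodes ∧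
    ManyOneRed CTLCountableSatCodes SOTruthCodes ∧
    ManyOneRed SOTruthCodes CTLCountableSatCodes ∧
    ManyOneRed CTLFinBranchSatCodes SOTruthCodes ∧
    ManyOneRed SOTruthCodes CTLFinBranchSatCodes := by
  exact ⟨HyperProof.ManyOneRed_trans HyperProof.countable_to_SO HyperProof.SO_to_fin,
    HyperProof.ManyOneRed_trans HyperProof.fin_to_SO HyperProof.SO_to_countable,
    HyperProof.countable_to_SO, HyperProof.SO_to_countable, HyperProof.fin_to_SO,
    HyperProof.SO_to_fin⟩
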